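/- arXiv:2408.14616 — 5 statements merged into one kernel-verified Lean document; each statement's English description precedes it below -/
import Mathlib

section
/- Let m, n be positive integers and let f : ℝ^m → ℝ^n be infinitely differentiable (C^∞). Then the set of critical values of f, namely { y ∈ ℝ^n : ∃ x ∈ ℝ^m, f(x) = y and the Fréchet derivative Df(x) : ℝ^m → ℝ^n is not surjective }, has Lebesgue measure zero in ℝ^n. -/
open MeasureTheory
open scoped ContDiff

section SardAux
open Set Filter Topology

/-- Sard's theorem for maps defined on open subsets of `E`. -/
def SardFor (E : Type) [NormedAddCommGroup E] [NormedSpace ℝ E] : Prop :=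
  ∀ (n : ℕ) (f : E → (Fin n → ℝ)) (U : Set E), IsOpen U → ContDiffOn ℝ ∞ f U →
    volume (f '' {x ∈ U | ¬ Function.Surjective (fderiv ℝ f x)}) = 0

variable {E : Type} [NormedAddCommGroup E] [NormedSpace ℝ E] [FiniteDimensional ℝ E]

theorem sard_null_of_local {n : ℕ} (f : E → (Fin n → ℝ)) (s : Set E)
    (h : ∀ x ∈ s, ∃ u ∈ 𝓝 x, volume (f '' (s ∩ u)) = 0) : volume (f '' s) = 0 := by
  have : SecondCountableTopology E := secondCountable_of_proper
  choose! u hu hn using h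
  obtain ⟨t, hts, htc, hst⟩ := TopologicalSpace.countable_cover_nhdsWithin
    (f := u) (s := s) (fun x hx => mem_nhdsWithin_of_mem_nhds (hu x hx))
  have hsub : f '' s ⊆ ⋃ x ∈ t, f '' (s ∩ u x) := by
    rintro _ ⟨y, hy, rfl⟩
    obtain ⟨x, hx, hyx⟩ := mem_iUnion₂.1 (hst hy)
    exact mem_iUnion₂.2 ⟨x, hx, y, ⟨hy, hyx⟩, rfl⟩
  exact measure_mono_null hsub ((measure_biUnion_null_iff htc).2 fun x hx => hn x (hts hx))

theorem sard_isOpen_surj {F : Type*} [NormedAddCommGroup F] [NormedSpace ℝ F]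
    [FiniteDimensional ℝ F] : IsOpen {L : E →L[ℝ] F | Function.Surjective L} := by
  rw [isOpen_iff_mem_nhds]
  intro L hL
  obtain ⟨R, hR⟩ := LinearMap.exists_rightInverse_of_surjective (L : E →ₗ[ℝ] F)
    (LinearMap.range_eq_top.2 hL)
  let R' : F →L[ℝ] E := LinearMap.toContinuousLinearMap R
  have hcont : Continuous (fun M : E →L[ℝ] F => M.comp R') := by fun_prop
  have hid : L.comp R' = ((ContinuousLinearEquiv.refl ℝ F : F ≃L[ℝ] F) : F →L[ℝ] F) := by
    ext x
    exact LinearMap.congr_fun hR x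
  have : (fun M : E →L[ℝ] F => M.comp R') ⁻¹' range ((↑) : (F ≃L[ℝ] F) → F →L[ℝ] F) ∈ 𝓝 L := by
    refine (ContinuousLinearEquiv.isOpen.preimage hcont).mem_nhds ?_
    exact ⟨_, hid.symm⟩
  filter_upwards [this] with M hM
  obtain ⟨e, he⟩ := hM
  intro y
  obtain ⟨z, hz⟩ := e.surjective y
  refine ⟨R' z, ?_⟩
  have := congrArg (fun T : F →L[ℝ] F => T z) he
  simp only [ContinuousLinearMap.comp_apply] at this
  rw [← this]; exact hz

theorem sard_ift {G : Type*} [NormedAddCommGroup G] [NormedSpace ℝ G]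
    (Φ : E → G) (U : Set E) (hU : IsOpen U) (hΦ : ContDiffOn ℝ ∞ Φ U) (x₀ : E) (hx : x₀ ∈ U)
    (e : E ≃L[ℝ] G) (he : fderiv ℝ Φ x₀ = e) :
    ∃ ψ : OpenPartialHomeomorph E G, x₀ ∈ ψ.source ∧ ψ.source ⊆ U ∧ (∀ x, ψ x = Φ x) ∧
      ContDiffOn ℝ ∞ ψ.symm ψ.target := by
  have hat : ∀ x ∈ U, ContDiffAt ℝ ∞ Φ x := fun x h => hΦ.contDiffAt (hU.mem_nhds h)
  have hd : ∀ x ∈ U, HasFDerivAt Φ (fderiv ℝ Φ x) x := fun x h =>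
    ((hat x h).differentiableAt (by simp)).hasFDerivAt
  have hd0 : HasFDerivAt Φ (e : E →L[ℝ] G) x₀ := he ▸ hd x₀ hx
  let ψ₀ := (hat x₀ hx).toOpenPartialHomeomorph Φ hd0 (by simp)
  let W := U ∩ (fderiv ℝ Φ) ⁻¹' range ((↑) : (E ≃L[ℝ] G) → E →L[ℝ] G)
  have hW : IsOpen W := by
    refine ContinuousOn.isOpen_inter_preimage ?_ hU ContinuousLinearEquiv.isOpen
    exact (hΦ.fderiv_of_isOpen (m := ∞) hU (by simp)).continuousOn
  refine ⟨ψ₀.restrOpen W hW, ?_, ?_, ?_, ?_⟩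
  · rw [OpenPartialHomeomorph.restrOpen_source]
    exact ⟨(hat x₀ hx).mem_toOpenPartialHomeomorph_source hd0 (by simp), hx, e, he.symm⟩
  · rw [OpenPartialHomeomorph.restrOpen_source]
    exact fun x h => h.2.1
  · intro x; rfl
  · intro y hy
    have hs := (ψ₀.restrOpen W hW).map_target hy
    rw [OpenPartialHomeomorph.restrOpen_source] at hs
    obtain ⟨-, hsU, e', he'⟩ := hs
    refine (OpenPartialHomeomorph.contDiffAt_symm (f₀' := e') _ hy ?_ ?_).contDiffWithinAt
    · rw [he']; exact hd _ hsU
    · exact hat _ hsU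

theorem sard_chart (h : E → ℝ) (U : Set E) (hU : IsOpen U) (hh : ContDiffOn ℝ ∞ h U) (x₀ : E)
    (hx : x₀ ∈ U) (hne : fderiv ℝ h x₀ ≠ 0) :
    ∃ K : Submodule ℝ E, Module.finrank ℝ K + 1 = Module.finrank ℝ E ∧
      ∃ ψ : OpenPartialHomeomorph E (ℝ × K), x₀ ∈ ψ.source ∧ ψ.source ⊆ U ∧
        (∀ x, (ψ x).1 = h x) ∧ ContDiffOn ℝ ∞ ψ.symm ψ.target := by
  set L := fderiv ℝ h x₀ with hL
  have hs : Function.Surjective (L : E →ₗ[ℝ] ℝ) :=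
    LinearMap.surjective (fun h0 => hne (by ext x; exact LinearMap.congr_fun h0 x))
  obtain ⟨v, hv⟩ := hs 1
  have hv : L v = 1 := hv
  let K : Submodule ℝ E := LinearMap.ker (L : E →ₗ[ℝ] ℝ)
  have hK : ∀ k : K, L k = 0 := fun k => k.2
  let π : E →ₗ[ℝ] K := LinearMap.codRestrict K (LinearMap.id - (L : E →ₗ[ℝ] ℝ).smulRight v) (by
    intro x
    change L (x - L x • v) = 0
    simp [hv])
  have hπ : ∀ x, (π x : E) = x - L x • v := fun x => rfl
  let e₀ : E ≃ₗ[ℝ] ℝ × K := LinearEquiv.ofLinearMap ((L : E →ₗ[ℝ] ℝ).prod π)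
    (LinearMap.coprod (LinearMap.toSpanSingleton ℝ E v) K.subtype)
    (by
      apply LinearMap.ext
      rintro ⟨t, k⟩
      have hk := hK k
      refine Prod.ext ?_ (Subtype.ext ?_)
      · simp [hv, hk]
      · simp [hπ, hv, hk])
    (by
      apply LinearMap.ext
      intro x
      simp [hπ])
  let e : E ≃L[ℝ] ℝ × K := e₀.toContinuousLinearEquiv
  let π' : E →L[ℝ] K := LinearMap.toContinuousLinearMap π
  refine ⟨K, ?_, ?_⟩
  · have := LinearMap.finrank_range_add_finrank_ker (L : E →ₗ[ℝ] ℝ)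
    rw [LinearMap.range_eq_top.2 hs, finrank_top, Module.finrank_self] at this
    change Module.finrank ℝ (LinearMap.ker (L : E →ₗ[ℝ] ℝ)) + 1 = _
    rw [add_comm]; exact this
  · have hder : fderiv ℝ (fun x => (h x, π' x)) x₀ = e := by
      have h1 : HasFDerivAt h L x₀ :=
        ((hh.contDiffAt (hU.mem_nhds hx)).differentiableAt (by simp)).hasFDerivAt
      have := (h1.prodMk (π'.hasFDerivAt (x := x₀))).fderiv
      rw [this]
      ext x <;> rfl
    obtain ⟨ψ, h1, h2, h3, h4⟩ := sard_ift (fun x => (h x, π' x)) U hU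
      (hh.prodMk π'.contDiff.contDiffOn) x₀ hx e hder
    exact ⟨ψ, h1, h2, fun x => by rw [h3], h4⟩

/-- Points where the derivative is nonzero. -/
theorem sard_step1 (IH : ∀ K : Submodule ℝ E, Module.finrank ℝ K + 1 = Module.finrank ℝ E →
      SardFor K) (n : ℕ) (f : E → (Fin n → ℝ)) (U : Set E) (hU : IsOpen U)
    (hf : ContDiffOn ℝ ∞ f U) :
    volume (f '' {x ∈ U | ¬ Function.Surjective (fderiv ℝ f x) ∧ fderiv ℝ f x ≠ 0}) = 0 := by
  have hat : ∀ x ∈ U, ContDiffAt ℝ ∞ f x := fun x h => hf.contDiffAt (hU.mem_nhds h)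
  have hd : ∀ x ∈ U, HasFDerivAt f (fderiv ℝ f x) x := fun x h =>
    ((hat x h).differentiableAt (by simp)).hasFDerivAt
  apply sard_null_of_local
  rintro x₀ ⟨hx, -, hne⟩
  obtain ⟨i, hi⟩ : ∃ i, fderiv ℝ (fun x => f x i) x₀ ≠ 0 := by
    by_contra! hcon
    apply hne
    ext v i
    have h1 := (hasFDerivAt_pi'.1 (hd x₀ hx) i).fderiv
    rw [hcon i] at h1
    have := congrArg (fun T : E →L[ℝ] ℝ => T v) h1
    simpa using this.symm
  obtain ⟨n, rfl⟩ : ∃ k, n = k + 1 := ⟨n - 1, by have := i.2; omega⟩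
  have hfi : ContDiffOn ℝ ∞ (fun x => f x i) U := contDiffOn_pi.1 hf i
  obtain ⟨K, hK, ψ, hxs, hsU, hψ, hψs⟩ := sard_chart _ U hU hfi x₀ hx hi
  have hS := IH K hK
  obtain ⟨C, hCn, hCs, hCc⟩ := local_compact_nhds (ψ.open_source.mem_nhds hxs)
  refine ⟨C, hCn, ?_⟩
  let A : Set (Fin (n + 1) → ℝ) := f '' (C \ {x | x ∈ U ∧ Function.Surjective (fderiv ℝ f x)})
  have hAc : IsCompact A := by
    have hop : IsOpen (U ∩ (fderiv ℝ f) ⁻¹' {L | Function.Surjective L}) :=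
      ContinuousOn.isOpen_inter_preimage
        (hf.fderiv_of_isOpen (m := ∞) hU (by simp)).continuousOn hU sard_isOpen_surj
    exact (hCc.diff hop).image_of_continuousOn
      (hf.continuousOn.mono fun x h => hsU (hCs h.1))
  refine measure_mono_null (t := A) (image_mono fun x h => ⟨h.2, fun h' => h.1.2.1 h'.2⟩) ?_
  let e := MeasurableEquiv.piFinSuccAbove (fun _ : Fin (n + 1) => ℝ) i
  have hmp : MeasurePreserving e volume volume :=
    volume_preserving_piFinSuccAbove (fun _ : Fin (n + 1) => ℝ) i
  have hB : MeasurableSet (e.symm ⁻¹' A) := e.symm.measurable hAc.measurableSet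
  have hAB : A = e ⁻¹' (e.symm ⁻¹' A) := by ext x; simp
  rw [hAB, hmp.measure_preimage hB.nullMeasurableSet, Measure.volume_eq_prod,
    Measure.measure_prod_null hB]
  refine Eventually.of_forall fun t => ?_
  -- the slice at `t`
  let ι : K → ℝ × K := fun k => (t, k)
  let G : K → (Fin n → ℝ) := fun k j => f (ψ.symm (t, k)) (i.succAbove j)
  have hι : ContDiff ℝ ∞ ι := by fun_prop
  have hV : IsOpen (ι ⁻¹' ψ.target) := ψ.open_target.preimage hι.continuous
  have hfψ : ContDiffOn ℝ ∞ (f ∘ ψ.symm) ψ.target :=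
    hf.comp hψs (fun p hp => hsU (ψ.map_target hp))
  have hG : ContDiffOn ℝ ∞ G (ι ⁻¹' ψ.target) := by
    have h1 : ContDiffOn ℝ ∞ (fun k => f (ψ.symm (ι k))) (ι ⁻¹' ψ.target) :=
      hfψ.comp hι.contDiffOn (fun k hk => hk)
    exact contDiffOn_pi.2 fun j => contDiffOn_pi.1 h1 (i.succAbove j)
  refine measure_mono_null ?_ (hS n G _ hV hG)
  intro z hz
  obtain ⟨x, ⟨hxC, hxn⟩, hfx⟩ : e.symm (t, z) ∈ A := hz
  have hfx : f x = i.insertNth t z := hfx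
  have hxS := hCs hxC
  have hψx : ψ x = (t, (ψ x).2) := by
    refine Prod.ext ?_ rfl
    rw [hψ x, hfx]; simp
  set k := (ψ x).2 with hk
  have htk : (t, k) ∈ ψ.target := hψx ▸ ψ.map_source hxS
  have hback : ψ.symm (t, k) = x := by rw [← hψx]; exact ψ.left_inv hxS
  refine ⟨k, ⟨htk, fun hsurj => hxn ⟨hsU hxS, ?_⟩⟩, ?_⟩
  · have hsd : HasFDerivAt ψ.symm (fderiv ℝ ψ.symm (t, k)) (t, k) :=
      ((hψs.contDiffAt (ψ.open_target.mem_nhds htk)).differentiableAt (by simp)).hasFDerivAt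
    have hfd : HasFDerivAt f (fderiv ℝ f x) (ψ.symm (t, k)) := hback ▸ hd x (hsU hxS)
    have hD := hfd.comp (t, k) hsd
    set D := (fderiv ℝ f x).comp (fderiv ℝ ψ.symm (t, k)) with hDdef
    have hDi : ∀ p, D p i = p.1 := by
      have h1 := hasFDerivAt_pi'.1 hD i
      have h2 : HasFDerivAt (fun p : ℝ × K => (f ∘ ψ.symm) p i)
          (ContinuousLinearMap.fst ℝ ℝ K) (t, k) := by
        refine (hasFDerivAt_fst (p := (t, k))).congr_of_eventuallyEq ?_
        filter_upwards [ψ.open_target.mem_nhds htk] with p hp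
        change f (ψ.symm p) i = p.1
        rw [← hψ, ψ.right_inv hp]
      intro p
      exact congrArg (fun T : ℝ × K →L[ℝ] ℝ => T p) (h1.unique h2)
    have hDj : ∀ κ j, D (0, κ) (i.succAbove j) = fderiv ℝ G k κ j := by
      have hιd : HasFDerivAt ι (ContinuousLinearMap.inr ℝ ℝ K) k := hasFDerivAt_prodMk_right t k
      have h1 : HasFDerivAt ((f ∘ ψ.symm) ∘ ι) (D.comp (ContinuousLinearMap.inr ℝ ℝ K)) k :=
        HasFDerivAt.comp k hD hιd
      have h2 : HasFDerivAt G (fderiv ℝ G k) k :=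
        ((hG.contDiffAt (hV.mem_nhds htk)).differentiableAt (by simp)).hasFDerivAt
      intro κ j
      have h3 := hasFDerivAt_pi'.1 h1 (i.succAbove j)
      have h4 := hasFDerivAt_pi'.1 h2 j
      exact congrArg (fun T : K →L[ℝ] ℝ => T κ) (h3.unique h4)
    intro y
    obtain ⟨κ, hκ⟩ := hsurj (fun j => y (i.succAbove j) - D (y i, 0) (i.succAbove j))
    refine ⟨fderiv ℝ ψ.symm (t, k) (y i, κ), ?_⟩
    change D (y i, κ) = y
    funext l
    rcases Fin.eq_self_or_eq_succAbove i l with rfl | ⟨j, rfl⟩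
    · exact hDi _
    · have : ((y i, κ) : ℝ × K) = (y i, 0) + (0, κ) := by simp
      rw [this, map_add, Pi.add_apply, hDj, hκ]
      ring
  · funext j
    change f (ψ.symm (t, k)) (i.succAbove j) = z j
    rw [hback, hfx]; simp

/-- Points where the derivatives of order `1, …, i` vanish and the next one does not. -/
theorem sard_step2 (IH : ∀ K : Submodule ℝ E, Module.finrank ℝ K + 1 = Module.finrank ℝ E →
      SardFor K) (n : ℕ) (hn : 0 < n) (f : E → (Fin n → ℝ)) (U : Set E) (hU : IsOpen U)
    (hf : ContDiffOn ℝ ∞ f U) (i : ℕ) :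
    volume (f '' {x ∈ U | fderiv ℝ f x = 0 ∧ iteratedFDeriv ℝ i f x = 0 ∧
      iteratedFDeriv ℝ (i + 1) f x ≠ 0}) = 0 := by
  have hat : ∀ x ∈ U, ContDiffAt ℝ ∞ f x := fun x h => hf.contDiffAt (hU.mem_nhds h)
  have hd : ∀ x ∈ U, HasFDerivAt f (fderiv ℝ f x) x := fun x h =>
    ((hat x h).differentiableAt (by simp)).hasFDerivAt
  apply sard_null_of_local
  rintro x₀ ⟨hx, -, -, hne⟩
  have hw : ∀ x ∈ U, ContDiffAt ℝ ∞ (iteratedFDeriv ℝ i f) x := fun x h =>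
    (hat x h).iteratedFDeriv_right (m := ∞) (by exact_mod_cast le_top)
  have hne' : fderiv ℝ (iteratedFDeriv ℝ i f) x₀ ≠ 0 := by
    intro h0
    apply hne
    rw [← norm_eq_zero, ← norm_fderiv_iteratedFDeriv, h0]
    exact norm_zero (E := E →L[ℝ] (E [×i]→L[ℝ] (Fin n → ℝ)))
  obtain ⟨v, hv⟩ : ∃ v, fderiv ℝ (iteratedFDeriv ℝ i f) x₀ v ≠ 0 := by
    by_contra! hcon
    exact hne' (ContinuousLinearMap.ext hcon)
  obtain ⟨φ, hφ⟩ := SeparatingDual.exists_ne_zero (R := ℝ) hv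
  let h : E → ℝ := fun x => φ (iteratedFDeriv ℝ i f x)
  have hh : ContDiffOn ℝ ∞ h U := fun x hx =>
    (φ.contDiff.contDiffAt.comp x (hw x hx)).contDiffWithinAt
  have hh0 : fderiv ℝ h x₀ ≠ 0 := by
    intro h0
    have h1 : HasFDerivAt h (φ.comp (fderiv ℝ (iteratedFDeriv ℝ i f) x₀)) x₀ :=
      φ.hasFDerivAt.comp x₀ ((hw x₀ hx).differentiableAt (by simp)).hasFDerivAt
    rw [h1.fderiv] at h0
    exact hφ (congrArg (fun T : E →L[ℝ] ℝ => T v) h0)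
  obtain ⟨K, hK, ψ, hxs, hsU, hψ, hψs⟩ := sard_chart h U hU hh x₀ hx hh0
  have hS := IH K hK
  refine ⟨ψ.source, ψ.open_source.mem_nhds hxs, ?_⟩
  let ι : K → ℝ × K := fun k => (0, k)
  have hι : ContDiff ℝ ∞ ι := by fun_prop
  have hV : IsOpen (ι ⁻¹' ψ.target) := ψ.open_target.preimage hι.continuous
  have hG0 : ContDiffOn ℝ ∞ (ψ.symm ∘ ι) (ι ⁻¹' ψ.target) := hψs.comp hι.contDiffOn fun k hk => hk
  have hG : ContDiffOn ℝ ∞ (f ∘ (ψ.symm ∘ ι)) (ι ⁻¹' ψ.target) :=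
    hf.comp hG0 (fun k hk => hsU (ψ.map_target hk))
  refine measure_mono_null ?_ (hS n _ _ hV hG)
  rintro _ ⟨x, ⟨⟨hxU, hx1, hxi, -⟩, hxS⟩, rfl⟩
  have hψx : ψ x = (0, (ψ x).2) := by
    refine Prod.ext ?_ rfl
    rw [hψ x]; simp [h, hxi]
  set k := (ψ x).2 with hk
  have htk : ((0 : ℝ), k) ∈ ψ.target := hψx ▸ ψ.map_source hxS
  have hback : (ψ.symm ∘ ι) k = x := by
    change ψ.symm (0, k) = x
    rw [← hψx]; exact ψ.left_inv hxS
  refine ⟨k, ⟨htk, ?_⟩, by simp only [Function.comp_apply] at hback ⊢; rw [hback]⟩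
  have hfd : HasFDerivAt f (0 : E →L[ℝ] (Fin n → ℝ)) ((ψ.symm ∘ ι) k) := by
    rw [hback, ← hx1]; exact hd x hxU
  have hgd := ((hG0.contDiffAt (hV.mem_nhds htk)).differentiableAt (by simp)).hasFDerivAt
  rw [(hfd.comp k hgd).fderiv]
  intro hs
  obtain ⟨a, ha⟩ := hs (fun _ => 1)
  have := congrFun ha ⟨0, hn⟩
  simp at this

theorem sard_taylor (K U : Set E) (hU : IsOpen U) (hKU : K ⊆ U) (hK : Convex ℝ K) (M : ℝ)
    (k : ℕ) : ∀ (F : Type) [NormedAddCommGroup F] [NormedSpace ℝ F] (g : E → F),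
    ContDiffOn ℝ ∞ g U → (∀ x ∈ K, ‖iteratedFDeriv ℝ (k + 1) g x‖ ≤ M) →
    ∀ x ∈ K, (∀ j, 1 ≤ j → j ≤ k → iteratedFDeriv ℝ j g x = 0) →
    ∀ y ∈ K, ‖g y - g x‖ ≤ M * ‖y - x‖ ^ (k + 1) := by
  induction k with
  | zero =>
    intro F _ _ g hg hM x hx _ y hy
    have hdg : ∀ z ∈ K, DifferentiableAt ℝ g z := fun z hz =>
      (hg.contDiffAt (hU.mem_nhds (hKU hz))).differentiableAt (by simp)
    rw [zero_add, pow_one]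
    refine hK.norm_image_sub_le_of_norm_fderiv_le hdg (fun z hz => ?_) hx hy
    have := hM z hz
    rwa [← norm_iteratedFDeriv_fderiv, norm_iteratedFDeriv_zero] at this
  | succ k ih =>
    intro F _ _ g hg hM x hx h0 y hy
    have hM0 : 0 ≤ M := (norm_nonneg _).trans (hM x hx)
    have hdg : ∀ z ∈ K, DifferentiableAt ℝ g z := fun z hz =>
      (hg.contDiffAt (hU.mem_nhds (hKU hz))).differentiableAt (by simp)
    have hx0 : fderiv ℝ g x = 0 := by
      have := h0 1 le_rfl (by omega)
      rw [← norm_eq_zero, ← zero_add 1, ← norm_iteratedFDeriv_fderiv, norm_iteratedFDeriv_zero,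
        norm_eq_zero] at this
      exact this
    have key := ih (E →L[ℝ] F) (fderiv ℝ g) (hg.fderiv_of_isOpen hU (by simp))
      (fun z hz => by rw [norm_iteratedFDeriv_fderiv]; exact hM z hz) x hx
      (fun j h1 h2 => by
        rw [← norm_eq_zero, norm_iteratedFDeriv_fderiv, norm_eq_zero]
        exact h0 _ (by omega) (by omega))
    have hseg : segment ℝ x y ⊆ K := hK.segment_subset hx hy
    have := (convex_segment x y).norm_image_sub_le_of_norm_fderiv_le (f := g) (𝕜 := ℝ)
      (C := M * ‖y - x‖ ^ (k + 1)) (fun z hz => hdg z (hseg hz))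
      (fun z hz => by
        have h1 := key z (hseg hz)
        rw [hx0, sub_zero] at h1
        refine h1.trans ?_
        gcongr
        exact norm_sub_le_of_mem_segment hz)
      (left_mem_segment ℝ x y) (right_mem_segment ℝ x y)
    rw [pow_succ, ← mul_assoc]; exact this

/-- Points where enough derivatives vanish. -/
theorem sard_step3 (n : ℕ) (hn : 0 < n) (f : E → (Fin n → ℝ)) (U : Set E) (hU : IsOpen U)
    (hf : ContDiffOn ℝ ∞ f U) :
    volume (f '' {x ∈ U | ∀ j, 1 ≤ j → j ≤ Module.finrank ℝ E →
      iteratedFDeriv ℝ j f x = 0}) = 0 := by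
  have : SecondCountableTopology E := secondCountable_of_proper
  set m := Module.finrank ℝ E with hm
  set S := {x ∈ U | ∀ j, 1 ≤ j → j ≤ m → iteratedFDeriv ℝ j f x = 0} with hS
  have hdim : dimH (f '' S) ≤ dimH S / ((m + 1 : ℕ) : NNReal) := by
    refine dimH_image_le_of_locally_holder_on (by positivity) ?_
    rintro x₀ ⟨hx₀, -⟩
    obtain ⟨r, hr, hrU⟩ := Metric.nhds_basis_closedBall.mem_iff.1 (hU.mem_nhds hx₀)
    have hcont : ContinuousOn (iteratedFDeriv ℝ (m + 1) f) (Metric.closedBall x₀ r) := fun x hx =>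
      (((hf.contDiffAt (hU.mem_nhds (hrU hx))).iteratedFDeriv_right (m := ∞) (i := m + 1)
        (by exact_mod_cast le_top)).continuousAt).continuousWithinAt
    obtain ⟨M, hM⟩ := (isCompact_closedBall x₀ r).exists_bound_of_continuousOn hcont
    have hM0 : 0 ≤ M := (norm_nonneg _).trans (hM x₀ (Metric.mem_closedBall_self hr.le))
    refine ⟨M.toNNReal, S ∩ Metric.closedBall x₀ r,
      inter_mem_nhdsWithin _ (Metric.closedBall_mem_nhds _ hr), ?_⟩
    rintro x ⟨hxS, hxB⟩ y ⟨hyS, hyB⟩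
    have := sard_taylor _ U hU hrU (convex_closedBall x₀ r) M m _ f hf hM y hyB hyS.2 x hxB
    rw [edist_dist, edist_dist, dist_eq_norm, dist_eq_norm]
    push_cast
    have e1 : (ENNReal.ofReal ‖x - y‖) ^ ((m : ℝ) + 1) = ENNReal.ofReal (‖x - y‖ ^ (m + 1)) := by
      rw [ENNReal.ofReal_pow (norm_nonneg _), ← ENNReal.rpow_natCast]
      push_cast; rfl
    rw [e1]
    change _ ≤ ENNReal.ofReal M * _
    rw [← ENNReal.ofReal_mul hM0]
    exact ENNReal.ofReal_le_ofReal this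
  have hdS : dimH S ≤ (m : ENNReal) := by
    rw [hm, ← Real.dimH_univ_eq_finrank E]; exact dimH_mono (subset_univ _)
  have hlt : dimH (f '' S) < ((n : NNReal) : ENNReal) := by
    refine (hdim.trans (ENNReal.div_le_div_right hdS _)).trans_lt ?_
    refine lt_of_lt_of_le (b := 1) ?_ (by exact_mod_cast hn)
    rw [ENNReal.div_lt_iff (by simp) (by simp)]
    rw [one_mul]
    exact_mod_cast Nat.lt_succ_self m
  have := hausdorffMeasure_of_dimH_lt hlt
  rw [← hausdorffMeasure_pi_real, Fintype.card_fin]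
  simpa using this

theorem sard_of_IH (E : Type) [NormedAddCommGroup E] [NormedSpace ℝ E] [FiniteDimensional ℝ E]
    (IH : ∀ K : Submodule ℝ E, Module.finrank ℝ K + 1 = Module.finrank ℝ E → SardFor K) :
    SardFor E := by
  intro n f U hU hf
  rcases Nat.eq_zero_or_pos n with rfl | hn
  · have : {x ∈ U | ¬ Function.Surjective (fderiv ℝ f x)} = ∅ := by
      ext x
      simp only [mem_ofPred_eq, mem_empty_iff_false, iff_false, not_and, not_not]
      exact fun _ y => ⟨0, Subsingleton.elim _ _⟩
    rw [this]; simp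
  have h1 := sard_step1 IH n f U hU hf
  have h2 := measure_iUnion_null (fun i => sard_step2 IH n hn f U hU hf i)
  have h3 := sard_step3 n hn f U hU hf
  refine measure_mono_null ?_ (measure_union_null h1 (measure_union_null h2 h3))
  rintro _ ⟨x, ⟨hxU, hxs⟩, rfl⟩
  by_cases hx0 : fderiv ℝ f x = 0
  · right
    by_cases hall : ∀ j, 1 ≤ j → iteratedFDeriv ℝ j f x = 0
    · exact Or.inr ⟨x, ⟨hxU, fun j hj _ => hall j hj⟩, rfl⟩
    · left
      by_contra hcon
      apply hall
      intro j hj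
      induction j, hj using Nat.le_induction with
      | base =>
        rw [← norm_eq_zero, ← zero_add 1, ← norm_iteratedFDeriv_fderiv, norm_iteratedFDeriv_zero,
          hx0, norm_zero]
      | succ i hi ih =>
        by_contra hne
        exact hcon (mem_iUnion.2 ⟨i, x, ⟨hxU, hx0, ih, hne⟩, rfl⟩)
  · exact Or.inl ⟨x, ⟨hxU, hxs, hx0⟩, rfl⟩

theorem sard_main (m : ℕ) : ∀ (E : Type) [NormedAddCommGroup E] [NormedSpace ℝ E]
    [FiniteDimensional ℝ E], Module.finrank ℝ E = m → SardFor E := by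
  induction m with
  | zero =>
    intro E _ _ _ hE
    exact sard_of_IH E (fun K hK => by omega)
  | succ m ih =>
    intro E _ _ _ hE
    exact sard_of_IH E (fun K hK => ih K (by omega))
end SardAux

/-- **Morse–Sard theorem.** For a `C^∞` map `f : ℝ^m → ℝ^n` (with `m, n` positive),
the set of critical values of `f`, i.e. the set of `y` such that `y = f x` for some
point `x` at which the Fréchet derivative of `f` is not surjective, has Lebesgue
measure zero in `ℝ^n`. -/
theorem stmt_0 (m n : ℕ) (hm : 0 < m) (hn : 0 < n)
    (f : (Fin m → ℝ) → (Fin n → ℝ)) (hf : ContDiff ℝ ∞ f) :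
    volume {y : Fin n → ℝ | ∃ x : Fin m → ℝ,
      f x = y ∧ ¬ Function.Surjective (fderiv ℝ f x)} = 0 := by
  have h := sard_main m (Fin m → ℝ) (by simp) n f Set.univ isOpen_univ hf.contDiffOn
  refine measure_mono_null ?_ h
  rintro y ⟨x, hxy, hx⟩
  exact ⟨x, ⟨Set.mem_univ _, hx⟩, hxy⟩
end

section
/- Let Φ : B(α₀, R) ⊆ ℝ^n → ℝ^N be a C²-function such that the Fréchet derivative DΦ(α₀) : ℝ^n → ℝ^N is injective. Then there exist constants r, β, γ > 0 with r ≤ R such that (1) ⟨DΦ(α₀)ᵀ DΦ(α₀) v, v⟩ ≥ β‖v‖² for all v ∈ ℝ^n, and (2) ‖D²Φ(α)‖ ≤ γ for all α ∈ B(α₀, r); consequently, with r_{β,γ} = min{ r, √β/(6γ) }, the restriction of Φ to B(α₀, r_{β,γ}) is injective, so there is a map Φ⁻¹ : Φ(B(α₀, r_{β,γ})) → B(α₀, r_{β,γ}) with Φ⁻¹(Φ(α)) = α for every α ∈ B(α₀, r_{β,γ}). -/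
open Metric
open scoped RealInnerProductSpace

/-- Corollary: if `Φ : B(α₀,R) ⊆ ℝ^n → ℝ^N` is `C²` and `DΦ(α₀)` is injective
(i.e. `Φ(α₀)` arises as a regular value), then there are `r, β, γ > 0` with `r ≤ R`
such that `⟨DΦ(α₀)ᵀ DΦ(α₀) v, v⟩ ≥ β ‖v‖²` for all `v` and `‖D²Φ(α)‖ ≤ γ` on
`B(α₀,r)`; consequently `Φ` is injective on `B(α₀, min r (√β/(6γ)))` and there is a
left inverse `Φ⁻¹` defined on `Φ(B(α₀, min r (√β/(6γ))))` returning the true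
parameters. -/
theorem stmt_5 (n N : ℕ) (α₀ : EuclideanSpace ℝ (Fin n)) (R : ℝ) (hR : 0 < R)
    (Φ : EuclideanSpace ℝ (Fin n) → EuclideanSpace ℝ (Fin N))
    (hΦ : ContDiffOn ℝ 2 Φ (ball α₀ R))
    (hinj : Function.Injective (fderiv ℝ Φ α₀)) :
    ∃ (r β γ : ℝ), 0 < r ∧ r ≤ R ∧ 0 < β ∧ 0 < γ ∧
      (∀ v : EuclideanSpace ℝ (Fin n),
        β * ‖v‖ ^ 2 ≤ ⟪(ContinuousLinearMap.adjoint (fderiv ℝ Φ α₀)) ((fderiv ℝ Φ α₀) v), v⟫) ∧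
      (∀ α ∈ ball α₀ r, ‖iteratedFDeriv ℝ 2 Φ α‖ ≤ γ) ∧
      Set.InjOn Φ (ball α₀ (min r (Real.sqrt β / (6 * γ)))) ∧
      ∃ Φinv : EuclideanSpace ℝ (Fin N) → EuclideanSpace ℝ (Fin n),
        Set.MapsTo Φinv (Φ '' ball α₀ (min r (Real.sqrt β / (6 * γ))))
          (ball α₀ (min r (Real.sqrt β / (6 * γ)))) ∧
        ∀ α ∈ ball α₀ (min r (Real.sqrt β / (6 * γ))), Φinv (Φ α) = α := by
  have hmem : ∀ x ∈ ball α₀ R, ContDiffAt ℝ 2 Φ x := fun x hx =>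
    hΦ.contDiffAt (isOpen_ball.mem_nhds hx)
  have h0 := hmem α₀ (mem_ball_self hR)
  obtain ⟨K, hK, hA⟩ := (LinearMap.injective_iff_antilipschitz
    ((fderiv ℝ Φ α₀) : EuclideanSpace ℝ (Fin n) →ₗ[ℝ] EuclideanSpace ℝ (Fin N))).1 hinj
  have hK' : (0 : ℝ) < K := by exact_mod_cast hK
  have hlow : ∀ v, ‖v‖ ≤ K * ‖fderiv ℝ Φ α₀ v‖ := fun v => by
    have := hA.le_mul_dist v 0
    simpa using this
  have hcont : ContinuousAt (fun x => ‖iteratedFDeriv ℝ 2 Φ x‖) α₀ := by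
    have hc := hΦ.continuousOn_iteratedFDerivWithin (m := 2) le_rfl isOpen_ball.uniqueDiffOn
    have hc2 : ContinuousOn (iteratedFDeriv ℝ 2 Φ) (ball α₀ R) :=
      hc.congr fun x hx => (iteratedFDerivWithin_of_isOpen 2 isOpen_ball hx).symm
    exact (hc2.continuousAt (isOpen_ball.mem_nhds (mem_ball_self hR))).norm
  obtain ⟨ε, hε, hball⟩ := Metric.eventually_nhds_iff_ball.1
    (hcont.eventually (gt_mem_nhds (lt_add_one ‖iteratedFDeriv ℝ 2 Φ α₀‖)))
  set γ : ℝ := ‖iteratedFDeriv ℝ 2 Φ α₀‖ + 1 with hγdef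
  have hγ : 0 < γ := by positivity
  have hr : 0 < min ε R := lt_min hε hR
  have hsq : Real.sqrt ((K : ℝ)⁻¹ ^ 2) = (K : ℝ)⁻¹ := Real.sqrt_sq (by positivity)
  have hbd : ∀ α ∈ ball α₀ (min ε R), ‖iteratedFDeriv ℝ 2 Φ α‖ ≤ γ := fun α hα =>
    (hball α (ball_subset_ball (min_le_left _ _) hα)).le
  have hdiff2 : ∀ x ∈ ball α₀ (min ε R), DifferentiableAt ℝ (fderiv ℝ Φ) x := fun x hx =>
    ((hmem x (ball_subset_ball (min_le_right _ _) hx)).fderiv_right (m := 1)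
      (by norm_num)).differentiableAt (by norm_num)
  have hdiff : ∀ x ∈ ball α₀ (min ε R), DifferentiableAt ℝ Φ x := fun x hx =>
    (hmem x (ball_subset_ball (min_le_right _ _) hx)).differentiableAt (by norm_num)
  have hlip : ∀ x ∈ ball α₀ (min ε R), ‖fderiv ℝ Φ x - fderiv ℝ Φ α₀‖ ≤ γ * ‖x - α₀‖ := by
    intro x hx
    refine (convex_ball α₀ (min ε R)).norm_image_sub_le_of_norm_fderiv_le (𝕜 := ℝ) hdiff2 ?_
      (mem_ball_self hr) hx
    intro y hy
    have := hbd y hy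
    rwa [← norm_iteratedFDeriv_fderiv, norm_iteratedFDeriv_one] at this
  have hI : Set.InjOn Φ (ball α₀ (min (min ε R) (Real.sqrt ((K : ℝ)⁻¹ ^ 2) / (6 * γ)))) := by
    rw [hsq]
    intro x hx y hy hxy
    have hb : ∀ z ∈ ball α₀ (min (min ε R) ((K : ℝ)⁻¹ / (6 * γ))),
        ‖fderiv ℝ Φ z - fderiv ℝ Φ α₀‖ ≤ (K : ℝ)⁻¹ / 6 := by
      intro z hz
      refine (hlip z (ball_subset_ball (min_le_left _ _) hz)).trans ?_
      have h1 : ‖z - α₀‖ ≤ (K : ℝ)⁻¹ / (6 * γ) := by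
        have := ball_subset_ball (min_le_right _ _) hz
        rw [mem_ball, dist_eq_norm] at this
        exact this.le
      calc γ * ‖z - α₀‖ ≤ γ * ((K : ℝ)⁻¹ / (6 * γ)) := by gcongr
        _ = (K : ℝ)⁻¹ / 6 := by field_simp
    have h2 := (convex_ball α₀ _).norm_image_sub_le_of_norm_fderiv_le' (𝕜 := ℝ)
      (fun z hz => hdiff z (ball_subset_ball (min_le_left _ _) hz)) hb hx hy
    rw [hxy, sub_self, zero_sub, norm_neg] at h2
    have h3 := hlow (y - x)
    have h4 : ‖y - x‖ ≤ ‖y - x‖ / 6 := by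
      calc ‖y - x‖ ≤ K * ‖fderiv ℝ Φ α₀ (y - x)‖ := h3
        _ ≤ K * ((K : ℝ)⁻¹ / 6 * ‖y - x‖) := by gcongr
        _ = ‖y - x‖ / 6 := by field_simp
    have h5 : ‖y - x‖ = 0 := by linarith [norm_nonneg (y - x)]
    exact (sub_eq_zero.1 (norm_eq_zero.1 h5)).symm
  refine ⟨min ε R, (K : ℝ)⁻¹ ^ 2, γ, hr, min_le_right _ _, by positivity, hγ, ?_, hbd, hI,
    Function.invFunOn Φ (ball α₀ (min (min ε R) (Real.sqrt ((K : ℝ)⁻¹ ^ 2) / (6 * γ)))),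
    ?_, ?_⟩
  · intro v
    rw [ContinuousLinearMap.adjoint_inner_left, real_inner_self_eq_norm_sq, ← mul_pow]
    have : (K : ℝ)⁻¹ * ‖v‖ ≤ ‖fderiv ℝ Φ α₀ v‖ := by
      rw [inv_mul_le_iff₀ hK']
      exact hlow v
    gcongr
  · rintro _ ⟨x, hx, rfl⟩
    exact Function.invFunOn_mem ⟨x, hx, rfl⟩
  · intro x hx
    exact hI.leftInvOn_invFunOn hx
end

section
/- Fix h > 0 and n ≥ 1. The set C of real n×n matrices α₀ for which there exist two roots λ₁, λ₂ (counted among the complex roots of the characteristic polynomial of α₀) with λ₁ ≠ λ₂ and λ₁ − λ₂ ∈ (2πi/h)·ℤ, or with λ₁ = λ₂ a repeated root, has Lebesgue measure zero in the space of n×n real matrices identified with ℝ^{n²}. -/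
open MeasureTheory

lemma null_aux {n : ℕ} (P : MvPolynomial (Fin n × Fin n) ℂ) (D : Fin n → Fin n → ℝ)
    (hD : MvPolynomial.eval (fun p => (D p.1 p.2 : ℂ)) P ≠ 0) :
    volume {A : Fin n → Fin n → ℝ | MvPolynomial.eval (fun p => (A p.1 p.2 : ℂ)) P = 0} = 0 := by
  set Z : Set (Fin n → Fin n → ℝ) :=
    {A | MvPolynomial.eval (fun p => (A p.1 p.2 : ℂ)) P = 0} with hZ
  have hcl : IsClosed Z := by
    refine isClosed_eq ?_ continuous_const
    exact (MvPolynomial.continuous_eval P).comp (by fun_prop)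
  have hS : MeasurableSet {x : ℝ × (Fin n → Fin n → ℝ) | D + x.1 • x.2 ∉ Z} := by
    have : IsClosed {x : ℝ × (Fin n → Fin n → ℝ) | D + x.1 • x.2 ∈ Z} :=
      hcl.preimage (by fun_prop)
    exact this.measurableSet.compl
  have key : ∀ᵐ t : ℝ, ∀ᵐ B : Fin n → Fin n → ℝ, D + t • B ∉ Z := by
    rw [Measure.ae_ae_comm (p := fun (t : ℝ) (B : Fin n → Fin n → ℝ) => D + t • B ∉ Z) hS]
    refine Filter.Eventually.of_forall fun B => ?_
    set q : Polynomial ℂ := MvPolynomial.aeval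
      (fun p : Fin n × Fin n => Polynomial.C (D p.1 p.2 : ℂ) +
        Polynomial.X * Polynomial.C (B p.1 p.2 : ℂ)) P with hq
    have hev : ∀ t : ℝ, q.eval (t : ℂ) =
        MvPolynomial.eval (fun p => (((D + t • B) p.1 p.2 : ℝ) : ℂ)) P := by
      intro t
      have h1 : q.eval (t : ℂ) = Polynomial.aeval (t : ℂ) q := by
        rw [Polynomial.coe_aeval_eq_eval]
      rw [h1, hq, ← AlgHom.comp_apply, MvPolynomial.comp_aeval, ← MvPolynomial.coe_aeval_eq_eval]
      simp [Polynomial.aeval_def]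
      congr 2
      funext p
      ring
    have hq0 : q ≠ 0 := by
      intro h0
      have := hev 0
      rw [h0] at this
      simp at this
      exact hD this.symm
    have hfin : {t : ℝ | D + t • B ∈ Z}.Finite := by
      have : {t : ℝ | D + t • B ∈ Z} ⊆ (fun t : ℝ => (t : ℂ)) ⁻¹' {z | q.IsRoot z} := by
        intro t ht
        have ht' : MvPolynomial.eval (fun p => (((D + t • B) p.1 p.2 : ℝ) : ℂ)) P = 0 := ht
        rw [← hev t] at ht'
        exact ht'
      refine Set.Finite.subset (Set.Finite.preimage ?_ (Polynomial.finite_setOfPred_isRoot hq0)) this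
      exact Complex.ofReal_injective.injOn
    have := hfin.measure_zero volume
    rw [ae_iff]
    simpa using this
  have ht0 : ∀ᵐ t : ℝ, t ≠ 0 := by simp [ae_iff]
  obtain ⟨t, ht, h0⟩ := (key.and ht0).exists
  rw [ae_iff] at ht
  simp only [not_not] at ht
  have h2 : {B : Fin n → Fin n → ℝ | D + t • B ∈ Z} =
    (fun B => t • B) ⁻¹' ((fun B => D + B) ⁻¹' Z) := rfl
  rw [h2, Measure.addHaar_preimage_smul _ h0, measure_preimage_add] at ht
  rcases mul_eq_zero.1 ht with h | h
  · exfalso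
    have : 0 < |(t ^ Module.finrank ℝ (Fin n → Fin n → ℝ))⁻¹| := by positivity
    simp only [ENNReal.ofReal_eq_zero] at h
    linarith
  · exact h

noncomputable def Fc {R : Type*} [CommRing R] {n : ℕ} (c : R) (M : Matrix (Fin n) (Fin n) R) : R :=
  (Polynomial.aeval (M - Matrix.scalar (Fin n) c) M.charpoly).det

noncomputable def Gd {R : Type*} [CommRing R] {n : ℕ} (M : Matrix (Fin n) (Fin n) R) : R :=
  (Polynomial.aeval M M.charpoly.derivative).det

lemma map_aeval_mat {R S : Type*} [CommRing R] [CommRing S] {n : ℕ} (f : R →+* S)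
    (M : Matrix (Fin n) (Fin n) R) (p : Polynomial R) :
    (Polynomial.aeval M p).map f = Polynomial.aeval (M.map f) (p.map f) := by
  have := Polynomial.map_aeval_eq_aeval_map (φ := f) (ψ := f.mapMatrix (m := Fin n)) (by
    ext r i j
    simp [Matrix.algebraMap_matrix_apply]
    split_ifs <;> simp) p M
  simpa using this

lemma map_Fc {R S : Type*} [CommRing R] [CommRing S] {n : ℕ} (f : R →+* S) (c : R)
    (M : Matrix (Fin n) (Fin n) R) : f (Fc c M) = Fc (f c) (M.map f) := by
  unfold Fc
  rw [RingHom.map_det, RingHom.mapMatrix_apply, map_aeval_mat, Matrix.charpoly_map]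
  congr 3
  ext i j
  simp [Matrix.diagonal_apply]
  split_ifs <;> simp

lemma map_Gd {R S : Type*} [CommRing R] [CommRing S] {n : ℕ} (f : R →+* S)
    (M : Matrix (Fin n) (Fin n) R) : f (Gd M) = Gd (M.map f) := by
  unfold Gd
  rw [RingHom.map_det, RingHom.mapMatrix_apply, map_aeval_mat, Matrix.charpoly_map,
    Polynomial.derivative_map]

/-- eigenvector -/
lemma exists_eig {n : ℕ} (M : Matrix (Fin n) (Fin n) ℂ) (l : ℂ) (hl : M.charpoly.IsRoot l) :
    ∃ v : Fin n → ℂ, v ≠ 0 ∧ M.mulVec v = l • v := by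
  rw [Polynomial.IsRoot, Matrix.eval_charpoly] at hl
  obtain ⟨v, hv, h⟩ := Matrix.exists_mulVec_eq_zero_iff.2 hl
  refine ⟨v, hv, ?_⟩
  rw [Matrix.sub_mulVec, sub_eq_zero] at h
  rw [← h]
  ext i
  simp [Matrix.mulVec_diagonal]

lemma aeval_eig {n : ℕ} (M : Matrix (Fin n) (Fin n) ℂ) (l : ℂ) (v : Fin n → ℂ)
    (h : M.mulVec v = l • v) (p : Polynomial ℂ) :
    (Polynomial.aeval M p).mulVec v = p.eval l • v := by
  induction p using Polynomial.induction_on' with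
  | add p q hp hq => simp [Matrix.add_mulVec, hp, hq, add_smul]
  | monomial k a =>
    have hk : ∀ k : ℕ, (M ^ k).mulVec v = l ^ k • v := by
      intro k
      induction k with
      | zero => simp
      | succ k ih =>
        rw [pow_succ, ← Matrix.mulVec_mulVec, h, Matrix.mulVec_smul, ih, smul_smul, pow_succ,
          mul_comm]
    rw [Polynomial.aeval_monomial, ← Algebra.smul_def, Matrix.smul_mulVec, hk]
    simp [smul_smul]

lemma Fc_zero {n : ℕ} (M : Matrix (Fin n) (Fin n) ℂ) (c l₁ l₂ : ℂ)
    (h1 : M.charpoly.IsRoot l₁) (h2 : M.charpoly.IsRoot l₂) (hc : l₁ - l₂ = c) : Fc c M = 0 := by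
  obtain ⟨v, hv, h⟩ := exists_eig M l₁ h1
  refine Matrix.exists_mulVec_eq_zero_iff.1 ⟨v, hv, ?_⟩
  rw [aeval_eig _ l₂ v]
  · rw [h2.eq_zero, zero_smul]
  · rw [Matrix.sub_mulVec, h, ← hc]
    ext i
    simp
    ring

lemma Gd_zero {n : ℕ} (M : Matrix (Fin n) (Fin n) ℂ) (l : ℂ)
    (h1 : 2 ≤ M.charpoly.rootMultiplicity l) : Gd M = 0 := by
  have h0 := M.charpoly_monic.ne_zero
  obtain ⟨hr, hd⟩ := (Polynomial.one_lt_rootMultiplicity_iff_isRoot h0).1 h1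
  obtain ⟨v, hv, h⟩ := exists_eig M l hr
  refine Matrix.exists_mulVec_eq_zero_iff.1 ⟨v, hv, ?_⟩
  rw [aeval_eig _ l v h, hd.eq_zero, zero_smul]

lemma aeval_diag {n : ℕ} (d : Fin n → ℂ) (p : Polynomial ℂ) :
    Polynomial.aeval (Matrix.diagonal d) p = Matrix.diagonal (fun i => p.eval (d i)) := by
  have := Polynomial.aeval_algHom_apply (Matrix.diagonalAlgHom (n := Fin n) (α := ℂ) ℂ) d p
  simp only [Matrix.diagonalAlgHom_apply] at this
  rw [this]
  congr 1
  ext i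
  simp [Polynomial.aeval_pi_apply]

lemma Fc_diag {n : ℕ} (d : Fin n → ℂ) (c : ℂ) (h : ∀ i j, d i - c ≠ d j) :
    Fc c (Matrix.diagonal d) ≠ 0 := by
  unfold Fc
  rw [Matrix.scalar_apply, Matrix.diagonal_sub, aeval_diag, Matrix.det_diagonal,
    Matrix.charpoly_diagonal, Finset.prod_ne_zero_iff]
  intro i _
  rw [Polynomial.eval_prod, Finset.prod_ne_zero_iff]
  intro j _
  simpa [sub_eq_zero] using h i j

lemma Gd_diag {n : ℕ} (d : Fin n → ℂ) (h : Function.Injective d) :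
    Gd (Matrix.diagonal d) ≠ 0 := by
  unfold Gd
  rw [aeval_diag, Matrix.det_diagonal, Matrix.charpoly_diagonal, Finset.prod_ne_zero_iff]
  intro i _
  have hs : (∏ j, (Polynomial.X - Polynomial.C (d j))).Separable :=
    Polynomial.separable_prod_X_sub_C_iff.2 h
  have := hs.eval₂_derivative_ne_zero (RingHom.id ℂ) (x := d i) (by
    rw [Polynomial.eval₂_id, Polynomial.eval_prod]
    exact Finset.prod_eq_zero (Finset.mem_univ i) (by simp))
  simpa using this

lemma eval_gen {n : ℕ} (A : Fin n → Fin n → ℝ) :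
    (Matrix.of fun i j => (MvPolynomial.X (i, j) : MvPolynomial (Fin n × Fin n) ℂ)).map
      (MvPolynomial.eval (fun p : Fin n × Fin n => (A p.1 p.2 : ℂ))) =
    (Matrix.of A).map Complex.ofReal := by
  ext i j
  simp

lemma diag_eq {n : ℕ} :
    (Matrix.of (fun i j : Fin n => if i = j then ((i : ℕ) : ℝ) else 0)).map Complex.ofReal =
      Matrix.diagonal (fun i : Fin n => ((i : ℕ) : ℂ)) := by
  ext i j
  simp [Matrix.diagonal_apply]
  split_ifs <;> simp

lemma null_F {n : ℕ} (c : ℂ) (hre : c.re = 0) (hc : c ≠ 0) :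
    volume {A : Fin n → Fin n → ℝ | Fc c ((Matrix.of A).map Complex.ofReal) = 0} = 0 := by
  have e : ∀ A : Fin n → Fin n → ℝ, Fc c ((Matrix.of A).map Complex.ofReal) =
      MvPolynomial.eval (fun p : Fin n × Fin n => (A p.1 p.2 : ℂ))
        (Fc (MvPolynomial.C c) (Matrix.of fun i j => MvPolynomial.X (i, j))) := by
    intro A
    rw [map_Fc, eval_gen, MvPolynomial.eval_C]
  simp only [e]
  refine null_aux _ (fun i j : Fin n => if i = j then ((i : ℕ) : ℝ) else 0) ?_
  have e' := e (fun i j : Fin n => if i = j then ((i : ℕ) : ℝ) else 0)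
  rw [diag_eq] at e'
  refine ne_of_eq_of_ne e'.symm ?_
  refine Fc_diag _ _ fun i j hij => hc ?_
  apply Complex.ext
  · simpa using hre
  · have := congrArg Complex.im hij
    simpa using this

lemma null_G {n : ℕ} :
    volume {A : Fin n → Fin n → ℝ | Gd ((Matrix.of A).map Complex.ofReal) = 0} = 0 := by
  have e : ∀ A : Fin n → Fin n → ℝ, Gd ((Matrix.of A).map Complex.ofReal) =
      MvPolynomial.eval (fun p : Fin n × Fin n => (A p.1 p.2 : ℂ))
        (Gd (Matrix.of fun i j => MvPolynomial.X (i, j))) := by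
    intro A
    rw [map_Gd, eval_gen]
  simp only [e]
  refine null_aux _ (fun i j : Fin n => if i = j then ((i : ℕ) : ℝ) else 0) ?_
  have e' := e (fun i j : Fin n => if i = j then ((i : ℕ) : ℝ) else 0)
  rw [diag_eq] at e'
  refine ne_of_eq_of_ne e'.symm ?_
  refine Gd_diag _ fun i j hij => ?_
  exact Fin.ext (by exact_mod_cast hij)

/-- Fix `h > 0` and `n ≥ 1`. The set of real `n×n` matrices `α₀` having two complex
characteristic roots `λ₁ ≠ λ₂` with `λ₁ − λ₂ ∈ (2πi/h)·ℤ`, or a repeated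
characteristic root, has Lebesgue measure zero in `M_n(ℝ) ≅ ℝ^{n²}`. -/
theorem stmt_7 (h : ℝ) (hh : 0 < h) (n : ℕ) (hn : 1 ≤ n) :
    volume {α₀ : Fin n → Fin n → ℝ |
      (∃ l₁ l₂ : ℂ, ((Matrix.of α₀).map Complex.ofReal).charpoly.IsRoot l₁ ∧
        ((Matrix.of α₀).map Complex.ofReal).charpoly.IsRoot l₂ ∧ l₁ ≠ l₂ ∧
        ∃ k : ℤ, l₁ - l₂ = 2 * Real.pi * Complex.I / h * k) ∨
      (∃ l : ℂ, 2 ≤ Polynomial.rootMultiplicity l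
        ((Matrix.of α₀).map Complex.ofReal).charpoly)} = 0 := by
  refine measure_mono_null (t := (⋃ k : {k : ℤ // k ≠ 0}, {A : Fin n → Fin n → ℝ |
      Fc (2 * Real.pi * Complex.I / h * (k : ℤ)) ((Matrix.of A).map Complex.ofReal) = 0}) ∪
      {A : Fin n → Fin n → ℝ | Gd ((Matrix.of A).map Complex.ofReal) = 0}) ?_ ?_
  · rintro A (⟨l₁, l₂, h1, h2, hne, k, hk⟩ | ⟨l, hl⟩)
    · left
      refine Set.mem_iUnion.2 ⟨⟨k, ?_⟩, Fc_zero _ _ l₁ l₂ h1 h2 hk⟩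
      rintro rfl
      apply hne
      simpa [sub_eq_zero] using hk
    · right
      exact Gd_zero _ l hl
  · refine measure_union_null (measure_iUnion_null ?_) null_G
    rintro ⟨k, hk⟩
    have e : (2 * Real.pi * Complex.I / h * (k : ℤ) : ℂ) =
        ((2 * Real.pi / h * k : ℝ) : ℂ) * Complex.I := by
      push_cast
      ring
    refine null_F _ ?_ ?_
    · simp only [e]
      simp
    · simp only [e]
      have hk' : (k : ℝ) ≠ 0 := by exact_mod_cast hk
      have : (2 * Real.pi / h * k : ℝ) ≠ 0 := by
        have := Real.pi_ne_zero
        positivity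
      exact mul_ne_zero (by exact_mod_cast this) Complex.I_ne_zero
end

section
/- Let f : ℝ^k × ℝ^n → ℝ^k be real-analytic on all of ℝ^k × ℝ^n with infinite radius of convergence, and let α₀ ∈ ℝ^n, x₀ ∈ ℝ^k be such that the solution of the initial value problem X' (t) = f(X(t), α₀), X(0) = x₀ exists on the interval [0, T]. Then there exist t₀ > 0, t₁ > T, open neighborhoods V_{α₀} ∋ α₀ and V_{x₀} ∋ x₀, and a map X : (−t₀, t₁) × V_{α₀} × V_{x₀} → ℝ^k that is jointly real-analytic in (t, α, x), satisfies X(0, α, x) = x for all (α, x) ∈ V_{α₀} × V_{x₀}, and satisfies ∂X/∂t(t, α, x) = f(X(t, α, x), α) for all (t, α, x) ∈ (−t₀, t₁) × V_{α₀} × V_{x₀}. -/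
section local_part
open Set Filter Topology Metric
variable {E : Type*} [NormedAddCommGroup E] [NormedSpace ℝ E]

/-- pointwise multilinear map on continuous functions -/
noncomputable def nemMul {K : Type*} [TopologicalSpace K] [CompactSpace K] (n : ℕ)
    (p : ContinuousMultilinearMap ℝ (fun _ : Fin n => E) E) :
    ContinuousMultilinearMap ℝ (fun _ : Fin n => C(K, E)) C(K, E) :=
  MultilinearMap.mkContinuous
    { toFun := fun u => ⟨fun s => p (fun i => u i s), by
        exact p.cont.comp (continuous_pi fun i => (u i).continuous)⟩
      map_update_add' := by
        intro _ m i x y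
        ext s
        have key : ∀ z : C(K, E), (fun j => (Function.update m i z) j s)
            = Function.update (fun j => m j s) i (z s) := by
          intro z; ext j; by_cases h : j = i
          · subst h; simp
          · simp [h]
        simp [key]
      map_update_smul' := by
        intro _ m i c x
        ext s
        have key : ∀ z : C(K, E), (fun j => (Function.update m i z) j s)
            = Function.update (fun j => m j s) i (z s) := by
          intro z; ext j; by_cases h : j = i
          · subst h; simp
          · simp [h]
        simp [key] } ‖p‖ (by
      intro m
      rw [ContinuousMap.norm_le _ (by positivity)]
      intro s
      refine (p.le_opNorm _).trans ?_
      gcongr with i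
      exact (m i).norm_coe_le_norm s)

theorem nemMul_apply {K : Type*} [TopologicalSpace K] [CompactSpace K] (n : ℕ)
    (p : ContinuousMultilinearMap ℝ (fun _ : Fin n => E) E) (u : Fin n → C(K, E)) (s : K) :
    nemMul n p u s = p (fun i => u i s) := rfl

theorem nemMul_norm {K : Type*} [TopologicalSpace K] [CompactSpace K] (n : ℕ)
    (p : ContinuousMultilinearMap ℝ (fun _ : Fin n => E) E) :
    ‖nemMul (K := K) n p‖ ≤ ‖p‖ :=
  MultilinearMap.mkContinuous_norm_le _ (norm_nonneg _) _

theorem nem_analyticAt [CompleteSpace E] {K : Type*} [TopologicalSpace K] [CompactSpace K]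
    (g : C(E, E)) (z : E) (hg : AnalyticAt ℝ g z) :
    AnalyticAt ℝ (fun u : C(K, E) => g.comp u) (ContinuousMap.const K z) := by
  obtain ⟨p, r, hp⟩ := hg
  let P : FormalMultilinearSeries ℝ C(K, E) C(K, E) := fun n => nemMul n (p n)
  have hrad : p.radius ≤ P.radius := by
    refine ENNReal.le_of_forall_nnreal_lt fun r hr => ?_
    apply P.le_radius_of_summable
    refine Summable.of_nonneg_of_le (fun n => by positivity) (fun n => ?_)
      (p.summable_norm_mul_pow hr)
    gcongr
    exact nemMul_norm _ _
  refine ⟨P, r, ⟨hp.r_le.trans hrad, hp.r_pos, ?_⟩⟩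
  intro y hy
  have hs : Summable (fun n => P n fun _ => y) :=
    P.summable (Metric.eball_subset_eball (hp.r_le.trans hrad) hy)
  suffices hh : g.comp (ContinuousMap.const K z + y) = ∑' n, P n fun _ => y by
    have h0 := hs.hasSum
    rw [← hh] at h0
    exact h0
  ext s
  have h1 : HasSum (fun n => (P n fun _ => y) s) ((∑' n, P n fun _ => y) s) := by
    exact ContinuousMap.hasSum_apply hs.hasSum s
  refine HasSum.unique (hp.hasSum (y := y s) ?_) h1
  rw [mem_eball_zero_iff] at hy ⊢
  refine lt_of_le_of_lt ?_ hy
  rw [enorm_le_iff_norm_le]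
  exact y.norm_coe_le_norm s

/-- integration operator -/
noncomputable def intOp [CompleteSpace E] : C(Icc (0:ℝ) 1, E) →L[ℝ] C(Icc (0:ℝ) 1, E) :=
  LinearMap.mkContinuous
    { toFun := fun u => ⟨fun s => ∫ r in (0:ℝ)..(s:ℝ), u (projIcc 0 1 zero_le_one r), by
        have hc : Continuous fun r : ℝ => u (projIcc 0 1 zero_le_one r) := by fun_prop
        have := intervalIntegral.continuous_primitive
          (fun a b => hc.intervalIntegrable (μ := MeasureTheory.volume) a b) 0
        exact this.comp continuous_subtype_val⟩
      map_add' := by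
        intro u v
        ext s
        have hc : ∀ u : C(Icc (0:ℝ) 1, E),
          Continuous fun r : ℝ => u (projIcc 0 1 zero_le_one r) := by intro u; fun_prop
        simp only [ContinuousMap.add_apply, ContinuousMap.coe_mk]
        exact intervalIntegral.integral_add ((hc u).intervalIntegrable _ _)
          ((hc v).intervalIntegrable _ _)
      map_smul' := by
        intro c u
        ext s
        simp } 1 (by
      intro u
      rw [ContinuousMap.norm_le _ (by positivity)]
      intro s
      have h := intervalIntegral.norm_integral_le_of_norm_le_const (a := 0) (b := (s:ℝ))
        (f := fun r => u (projIcc 0 1 zero_le_one r)) (C := ‖u‖) (fun r _ => u.norm_coe_le_norm _)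
      refine h.trans ?_
      rw [mul_comm]
      gcongr
      rw [sub_zero, abs_of_nonneg s.2.1]
      exact s.2.2)

theorem intOp_apply [CompleteSpace E] (u : C(Icc (0:ℝ) 1, E)) (s : Icc (0:ℝ) 1) :
    intOp u s = ∫ r in (0:ℝ)..(s:ℝ), u (projIcc 0 1 zero_le_one r) := rfl

/-- shear equivalence -/
noncomputable def shear {A B : Type*} [NormedAddCommGroup A] [NormedSpace ℝ A]
    [NormedAddCommGroup B] [NormedSpace ℝ B] (L : B →L[ℝ] A) : (A × B) ≃L[ℝ] (A × B) :=
  ContinuousLinearEquiv.equivOfInverse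
    ((ContinuousLinearMap.fst ℝ A B - L.comp (ContinuousLinearMap.snd ℝ A B)).prod
      (ContinuousLinearMap.snd ℝ A B))
    ((ContinuousLinearMap.fst ℝ A B + L.comp (ContinuousLinearMap.snd ℝ A B)).prod
      (ContinuousLinearMap.snd ℝ A B))
    (by intro x; ext <;> simp) (by intro x; ext <;> simp)

theorem implicit_part [CompleteSpace E] (g : C(E, E)) (z : E) (hg : AnalyticAt ℝ g z) :
    ∃ (U : ℝ × E → C(Icc (0:ℝ) 1, E)), AnalyticAt ℝ U (0, z) ∧ ∃ ρ > 0,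
      ∀ (u : C(Icc (0:ℝ) 1, E)) (τ : ℝ) (x : E), dist u (ContinuousMap.const _ z) < ρ → |τ| < ρ →
        dist x z < ρ → u - ContinuousMap.const _ x - τ • intOp (g.comp u) = 0 → U (τ, x) = u := by
  set c : C(Icc (0:ℝ) 1, E) := ContinuousMap.const _ z with hc
  let cst : E →L[ℝ] C(Icc (0:ℝ) 1, E) := ContinuousLinearMap.const ℝ _
  let Ψ : C(Icc (0:ℝ) 1, E) × (ℝ × E) → C(Icc (0:ℝ) 1, E) × (ℝ × E) := fun w =>
    (w.1 - cst w.2.2 - w.2.1 • intOp (g.comp w.1), w.2)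
  have hN : AnalyticAt ℝ (fun u : C(Icc (0:ℝ) 1, E) => g.comp u) c := nem_analyticAt g z hg
  have hN1 : AnalyticAt ℝ (fun w : C(Icc (0:ℝ) 1, E) × (ℝ × E) => intOp (g.comp w.1))
      (c, (0, z)) :=
    (intOp.analyticAt _).comp (AnalyticAt.fun_comp (g := fun u : C(Icc (0:ℝ) 1, E) => g.comp u) hN analyticAt_fst)
  have hΨ : AnalyticAt ℝ Ψ (c, (0, z)) := by
    refine AnalyticAt.prod (AnalyticAt.sub (AnalyticAt.sub analyticAt_fst ?_) (AnalyticAt.fun_smul ?_ hN1)) analyticAt_snd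
    · exact (cst.analyticAt _).comp (analyticAt_snd.comp analyticAt_snd)
    · exact analyticAt_fst.comp analyticAt_snd
  let B : ℝ × E →L[ℝ] C(Icc (0:ℝ) 1, E) := cst.comp (ContinuousLinearMap.snd ℝ ℝ E) +
    (ContinuousLinearMap.fst ℝ ℝ E).smulRight (intOp (g.comp c))
  have hD : HasFDerivAt Ψ ((shear B : _ ≃L[ℝ] _) : _ →L[ℝ] _) (c, (0, z)) := by
    have h1 := hN1.differentiableAt.hasFDerivAt
    have h2 : HasFDerivAt (fun w : C(Icc (0:ℝ) 1, E) × (ℝ × E) => w.2.1)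
      ((ContinuousLinearMap.fst ℝ ℝ E).comp (ContinuousLinearMap.snd ℝ _ _)) (c, ((0:ℝ), z)) :=
      hasFDerivAt_snd.fst
    have h3 : HasFDerivAt (fun w : C(Icc (0:ℝ) 1, E) × (ℝ × E) => cst w.2.2)
      (cst.comp ((ContinuousLinearMap.snd ℝ ℝ E).comp (ContinuousLinearMap.snd ℝ _ _))) (c, ((0:ℝ), z)) :=
      cst.hasFDerivAt.comp _ hasFDerivAt_snd.snd
    have h4 := ((hasFDerivAt_fst (𝕜 := ℝ) (p := (c, ((0:ℝ), z)))).sub h3).sub (h2.smul h1)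
    have h5 := h4.prodMk (hasFDerivAt_snd (𝕜 := ℝ) (p := (c, ((0:ℝ), z))))
    refine h5.congr_fderiv ?_
    ext w <;> simp [shear, B, sub_sub]
  have hst : HasStrictFDerivAt Ψ ((shear B : _ ≃L[ℝ] _) : _ →L[ℝ] _) (c, (0, z)) := by
    have := hΨ.hasStrictFDerivAt
    rwa [hD.fderiv] at this
  have hval : Ψ (c, (0, z)) = (0, (0, z)) := by
    simp only [Ψ, zero_smul, sub_zero]
    congr 1
    ext s; simp [cst, c]
  have hinv : AnalyticAt ℝ (hst.localInverse Ψ _ _) (0, (0, z)) := by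
    rw [← hval]
    exact (hst.toOpenPartialHomeomorph Ψ).analyticAt_symm' hst.mem_toOpenPartialHomeomorph_source
      hΨ hD.fderiv
  refine ⟨fun q => (hst.localInverse Ψ _ _ (0, q)).1, ?_, ?_⟩
  · have h6 : AnalyticAt ℝ (fun q : ℝ × E => hst.localInverse Ψ _ _ (0, q)) (0, z) :=
      AnalyticAt.fun_comp hinv (analyticAt_const.prod analyticAt_id)
    exact AnalyticAt.fun_comp analyticAt_fst h6
  · obtain ⟨ρ, hρ, h⟩ := Metric.eventually_nhds_iff.1 hst.eventually_left_inverse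
    refine ⟨ρ, hρ, fun u τ x hu hτ hx heq => ?_⟩
    have h7 := @h (u, (τ, x)) (by
      simp only [Prod.dist_eq]
      refine max_lt hu (max_lt ?_ hx)
      simpa using hτ)
    have h8 : Ψ (u, (τ, x)) = (0, (τ, x)) := by
      simp only [Ψ]; congr 1
    rw [h8] at h7
    exact congrArg Prod.fst h7


theorem local_flow [CompleteSpace E] (g : E → E) (hg : ∀ z, AnalyticAt ℝ g z) (z : E) :
    ∃ (φ : ℝ × E → E), ∃ ε > 0, AnalyticOnNhd ℝ φ (Ioo (-ε) ε ×ˢ ball z ε) ∧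
      ∀ x ∈ ball z ε, φ (0, x) = x ∧
        ∀ t ∈ Ioo (-ε) ε, HasDerivAt (fun s => φ (s, x)) (g (φ (t, x))) t := by
  have hgc : Continuous g := continuous_iff_continuousAt.2 fun z => (hg z).continuousAt
  obtain ⟨ε, hε, a, r, L, K, hr, hpl⟩ := IsPicardLindelof.of_contDiffAt_one (hg z).contDiffAt
  obtain ⟨α, hα, hαc⟩ := (hpl 0).exists_forall_mem_closedBall_eq_hasDerivWithinAt_continuousOn
  have hr' : (0:ℝ) < r := hr
  have hα0 : ∀ x ∈ closedBall z (r:ℝ), α (x, 0) = x := fun x hx => (hα x hx).1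
  have hα1 : ∀ x ∈ closedBall z (r:ℝ), ∀ t ∈ Ioo (-ε) ε,
      HasDerivAt (fun s => α (x, s)) (g (α (x, t))) t := by
    intro x hx t ht
    exact ((hα x hx).2 t ⟨by linarith [ht.1], by linarith [ht.2]⟩).hasDerivAt
      (Icc_mem_nhds (by linarith [ht.1]) (by linarith [ht.2]))
  obtain ⟨U, hU, ρ, hρ, hUu⟩ := implicit_part ⟨g, hgc⟩ z (hg z)
  have hcont : ContinuousAt α (z, 0) := by
    refine hαc.continuousAt (prod_mem_nhds (closedBall_mem_nhds _ hr') ?_)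
    exact Icc_mem_nhds (by simpa using hε) (by simpa using hε)
  obtain ⟨η, hη, hαη⟩ := Metric.continuousAt_iff.1 hcont ρ hρ
  rw [hα0 z (mem_closedBall_self hr'.le)] at hαη
  -- agreement
  have hagree : ∀ᶠ q : ℝ × E in 𝓝 (0, z), U q ⟨1, by simp⟩ = α (q.2, q.1) := by
    rw [Metric.eventually_nhds_iff]
    refine ⟨min (min η ρ) (min ε r), by positivity, ?_⟩
    rintro ⟨τ, x⟩ hq
    simp only [Prod.dist_eq, Real.dist_eq, sub_zero, max_lt_iff, lt_min_iff] at hq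
    obtain ⟨⟨⟨hτη, hxη⟩, hτρ, hxρ⟩, ⟨hτε, hxε⟩, hτr, hxr⟩ := hq
    have hxr' : x ∈ closedBall z (r:ℝ) := hxr.le
    have hmul : ∀ s ∈ Icc (0:ℝ) 1, |τ * s| ≤ |τ| := by
      intro s hs
      rw [abs_mul, abs_of_nonneg hs.1]
      exact mul_le_of_le_one_right (abs_nonneg _) hs.2
    have hder : ∀ s ∈ Icc (0:ℝ) 1,
        HasDerivAt (fun s => α (x, τ * s)) (τ • g (α (x, τ * s))) s := by
      intro s hs
      have h1 := hα1 x hxr' (τ * s) (abs_lt.1 ((hmul s hs).trans_lt hτε))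
      have h2 : HasDerivAt (fun s : ℝ => τ * s) τ s := by
        simpa using (hasDerivAt_id s).const_mul τ
      exact h1.scomp s h2
    have hcn : ContinuousOn (fun s => α (x, τ * s)) (Icc (0:ℝ) 1) :=
      fun s hs => (hder s hs).continuousAt.continuousWithinAt
    let u : C(Icc (0:ℝ) 1, E) := ⟨fun s => α (x, τ * s), hcn.domRestrict⟩
    have hux : ∀ s, u s = α (x, τ * s) := fun _ => rfl
    have hu : U (τ, x) = u := by
      apply hUu u τ x _ hτρ hxρ
      · ext s
        have hsub : uIcc (0:ℝ) s ⊆ Icc 0 1 := by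
          rw [uIcc_of_le s.2.1]; exact Icc_subset_Icc_right s.2.2
        have hI := intervalIntegral.integral_eq_sub_of_hasDerivAt (a := 0) (b := (s:ℝ))
          (f := fun s => α (x, τ * s)) (f' := fun s => τ • g (α (x, τ * s)))
          (fun r hr => hder r (hsub hr)) (by
            apply ContinuousOn.intervalIntegrable
            exact ((hgc.comp_continuousOn hcn).mono hsub).const_smul τ)
        have hI2 : intOp (ContinuousMap.comp ⟨g, hgc⟩ u) s
            = ∫ r in (0:ℝ)..(s:ℝ), g (α (x, τ * r)) := by
          rw [intOp_apply]
          apply intervalIntegral.integral_congr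
          intro r hr
          simp [hux, projIcc_of_mem zero_le_one (hsub hr)]
        rw [intervalIntegral.integral_smul] at hI
        simp only [ContinuousMap.sub_apply, ContinuousMap.smul_apply, hI2, hI]
        simp [hux, hα0 x hxr']
      · rw [ContinuousMap.dist_lt_iff hρ]
        intro s
        apply hαη
        simp only [Prod.dist_eq, Real.dist_eq, sub_zero, max_lt_iff]
        exact ⟨hxη, (hmul s s.2).trans_lt hτη⟩
    simp only [hu, hux, mul_one]
  have hφ : AnalyticAt ℝ (fun q : ℝ × E => α (q.2, q.1)) (0, z) := by
    have h1 : AnalyticAt ℝ (fun q : ℝ × E => U q ⟨1, by simp⟩) (0, z) := by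
      have h2 : AnalyticAt ℝ (fun u : C(Icc (0:ℝ) 1, E) => u ⟨1, by simp⟩) (U (0, z)) :=
        ContinuousLinearMap.analyticAt
          (ContinuousMap.evalCLM ℝ (⟨1, by simp⟩ : Icc (0:ℝ) 1) : C(Icc (0:ℝ) 1, E) →L[ℝ] E) _
      exact h2.fun_comp hU
    exact h1.congr hagree
  obtain ⟨δ, hδ, hδa⟩ := Metric.eventually_nhds_iff.1 hφ.eventually_analyticAt
  refine ⟨fun q : ℝ × E => α (q.2, q.1), min δ (min ε r), by positivity, ?_, ?_⟩
  · rintro ⟨t, x⟩ ⟨ht, hx⟩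
    apply hδa
    simp only [Prod.dist_eq, Real.dist_eq, sub_zero, max_lt_iff]
    exact ⟨(abs_lt.2 ht).trans_le (min_le_left _ _), (mem_ball.1 hx).trans_le (min_le_left _ _)⟩
  · intro x hx
    have hx' : x ∈ closedBall z (r:ℝ) :=
      ball_subset_closedBall (ball_subset_ball ((min_le_right _ _).trans (min_le_right _ _)) hx)
    refine ⟨hα0 x hx', fun t ht => hα1 x hx' t ?_⟩
    have : min δ (min ε (r:ℝ)) ≤ ε := (min_le_right _ _).trans (min_le_left _ _)
    exact ⟨by linarith [ht.1], by linarith [ht.2]⟩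

/-- uniqueness on order-connected sets -/
theorem ode_unique [CompleteSpace E] (g : E → E) (hg : ∀ z, AnalyticAt ℝ g z) (S : Set ℝ)
    (hS : IsPreconnected S) (a b : ℝ → E)
    (ha : ∀ t ∈ S, HasDerivAt a (g (a t)) t) (hb : ∀ t ∈ S, HasDerivAt b (g (b t)) t)
    (t₀ : ℝ) (ht₀ : t₀ ∈ S) (h0 : a t₀ = b t₀) : EqOn a b S := by
  intro t ht
  have hO : S.OrdConnected := hS.ordConnected
  refine hS.induction₂' (fun s t => a s = b s → a t = b t) ?_ (fun x y z _ _ _ h h' hx => h' (h hx))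
    ht₀ ht h0
  intro s hs
  have hac := (ha s hs).continuousAt
  have hbc := (hb s hs).continuousAt
  by_cases hab : a s = b s
  · obtain ⟨K, V, hV, hL⟩ := ((hg (a s)).contDiffAt (n := 1)).exists_lipschitzOnWith
    have hVb : V ∈ 𝓝 (b s) := hab ▸ hV
    obtain ⟨η, hη, h⟩ := Metric.eventually_nhds_iff.1 ((hac.eventually hV).and (hbc.eventually hVb))
    filter_upwards [self_mem_nhdsWithin, mem_nhdsWithin_of_mem_nhds (ball_mem_nhds s hη)]
      with t ht hd
    suffices hh : a t = b t from ⟨fun _ => hh, fun _ => hab⟩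
    rw [Real.ball_eq_Ioo] at hd
    have hd' : ∀ r ∈ Ioo (s - η) (s + η), a r ∈ V ∧ b r ∈ V := by
      intro r hr
      apply h
      rw [Real.dist_eq, abs_lt]
      exact ⟨by linarith [hr.1], by linarith [hr.2]⟩
    rcases le_total s t with hst | hst
    · have hss : Icc s t ⊆ S := hO.out hs ht
      have hsd : Icc s t ⊆ Ioo (s - η) (s + η) := fun r hr =>
        ⟨by linarith [hr.1], by linarith [hr.2, hd.2]⟩
      exact ODE_solution_unique_of_mem_Icc_right (v := fun _ => g) (s := fun _ => V) (K := K)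
        (fun _ _ => hL)
        (HasDerivAt.continuousOn fun r hr => ha r (hss hr))
        (fun r hr => (ha r (hss (Ico_subset_Icc_self hr))).hasDerivWithinAt)
        (fun r hr => (hd' r (hsd (Ico_subset_Icc_self hr))).1)
        (HasDerivAt.continuousOn fun r hr => hb r (hss hr))
        (fun r hr => (hb r (hss (Ico_subset_Icc_self hr))).hasDerivWithinAt)
        (fun r hr => (hd' r (hsd (Ico_subset_Icc_self hr))).2) hab ⟨hst, le_rfl⟩
    · have hss : Icc t s ⊆ S := hO.out ht hs
      have hsd : Icc t s ⊆ Ioo (s - η) (s + η) := fun r hr =>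
        ⟨by linarith [hr.1, hd.1], by linarith [hr.2]⟩
      exact ODE_solution_unique_of_mem_Icc_left (v := fun _ => g) (s := fun _ => V) (K := K)
        (fun _ _ => hL)
        (HasDerivAt.continuousOn fun r hr => ha r (hss hr))
        (fun r hr => (ha r (hss (Ioc_subset_Icc_self hr))).hasDerivWithinAt)
        (fun r hr => (hd' r (hsd (Ioc_subset_Icc_self hr))).1)
        (HasDerivAt.continuousOn fun r hr => hb r (hss hr))
        (fun r hr => (hb r (hss (Ioc_subset_Icc_self hr))).hasDerivWithinAt)
        (fun r hr => (hd' r (hsd (Ioc_subset_Icc_self hr))).2) hab ⟨le_rfl, hst⟩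
  · have hne : ∀ᶠ t in 𝓝 s, a t ≠ b t := hac.ne_iff_eventually_ne hbc |>.1 hab
    filter_upwards [mem_nhdsWithin_of_mem_nhds hne] with t ht
    exact ⟨fun h => absurd h hab, fun h => absurd h ht⟩


/-- a flow defined on a neighbourhood of `[0,t] × {z}` -/
def HasFlow (g : E → E) (z : E) (t : ℝ) : Prop :=
  ∃ δ > 0, ∃ X : ℝ × E → E, AnalyticOnNhd ℝ X (Ioo (-δ) (t + δ) ×ˢ ball z δ) ∧
    ∀ x ∈ ball z δ, X (0, x) = x ∧
      ∀ s ∈ Ioo (-δ) (t + δ), HasDerivAt (fun r => X (r, x)) (g (X (s, x))) s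

theorem flow_step [CompleteSpace E] (g : E → E) (hg : ∀ z, AnalyticAt ℝ g z) (z : E)
    (Z : ℝ → E) (hZ0 : Z 0 = z) (s s' : ℝ) (hs : 0 ≤ s)
    (hZ : ∀ t ∈ Icc 0 s, HasDerivAt Z (g (Z t)) t)
    (φ : ℝ × E → E) (w : E) (ε : ℝ) (hε : 0 < ε)
    (hφa : AnalyticOnNhd ℝ φ (Ioo (-ε) ε ×ˢ ball w ε))
    (hφ : ∀ x ∈ ball w ε, φ (0, x) = x ∧
        ∀ t ∈ Ioo (-ε) ε, HasDerivAt (fun s => φ (s, x)) (g (φ (t, x))) t)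
    (hw : Z s ∈ ball w ε) (hss : s' < s + ε / 2) (hflow : HasFlow g z s) : HasFlow g z s' := by
  obtain ⟨δ, hδ, X, hXa, hX⟩ := hflow
  have hXs : X (s, z) = Z s := by
    refine ode_unique g hg (Icc 0 s) isPreconnected_Icc (fun r => X (r, z)) Z (fun t ht => ?_) hZ 0
      ⟨le_rfl, hs⟩ ?_ ⟨hs, le_rfl⟩
    · exact (hX z (mem_ball_self hδ)).2 t ⟨by linarith [ht.1], by linarith [ht.2]⟩
    · rw [hZ0]; exact (hX z (mem_ball_self hδ)).1
  have hXsa : ∀ x ∈ ball z δ, AnalyticAt ℝ X (s, x) := fun x hx =>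
    hXa (s, x) ⟨⟨by linarith, by linarith⟩, hx⟩
  have hXsc : ContinuousAt (fun x => X (s, x)) z :=
    ContinuousAt.comp' (hXsa z (mem_ball_self hδ)).continuousAt (by fun_prop)
  obtain ⟨δ₁, hδ₁, h1⟩ := Metric.eventually_nhds_iff.1
    (hXsc.eventually (isOpen_ball.mem_nhds (hXs ▸ hw)))
  set m := min δ ε with hm
  have hmδ : m ≤ δ := min_le_left _ _
  have hmε : m ≤ ε := min_le_right _ _
  have hm0 : 0 < m := lt_min hδ hε
  set d := min (min δ δ₁) (ε / 2) with hd
  have hdδ : d ≤ δ := (min_le_left _ _).trans (min_le_left _ _)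
  have hdδ₁ : d ≤ δ₁ := (min_le_left _ _).trans (min_le_right _ _)
  have hdε : d ≤ ε / 2 := min_le_right _ _
  have hd0 : 0 < d := by positivity
  have hxδ : ∀ x ∈ ball z d, x ∈ ball z δ := fun x hx => ball_subset_ball hdδ hx
  have hxw : ∀ x ∈ ball z d, X (s, x) ∈ ball w ε := fun x hx =>
    h1 ((mem_ball.1 hx).trans_le hdδ₁)
  -- the shifted local flow
  let W : ℝ × E → E := fun q => φ (q.1 - s, X (s, q.2))
  have hW : ∀ x ∈ ball z d, ∀ t ∈ Ioo (s - ε) (s + ε),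
      HasDerivAt (fun r => W (r, x)) (g (W (t, x))) t := by
    intro x hx t ht
    have h2 := (hφ _ (hxw x hx)).2 (t - s) ⟨by linarith [ht.1], by linarith [ht.2]⟩
    exact h2.comp_sub_const t s
  have hWa : AnalyticOnNhd ℝ W (Ioo (s - ε) (s + ε) ×ˢ ball z d) := by
    rintro ⟨t, x⟩ ⟨ht, hx⟩
    have h2 : AnalyticAt ℝ φ (t - s, X (s, x)) :=
      hφa _ ⟨⟨by linarith [ht.1], by linarith [ht.2]⟩, hxw x hx⟩
    have h3 : AnalyticAt ℝ (fun q : ℝ × E => X (s, q.2)) (t, x) :=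
      AnalyticAt.fun_comp (g := X) (f := fun q : ℝ × E => (s, q.2)) (hXsa x (hxδ x hx))
        (analyticAt_const.prod analyticAt_snd)
    exact AnalyticAt.fun_comp (g := φ) (f := fun q : ℝ × E => (q.1 - s, X (s, q.2))) h2
      ((analyticAt_fst.sub analyticAt_const).prod h3)
  have hag : ∀ x ∈ ball z d, EqOn (fun r => X (r, x)) (fun r => W (r, x)) (Ioo (s - m) (s + m)) := by
    intro x hx
    refine ode_unique g hg _ isPreconnected_Ioo _ _ (fun t ht => ?_) (fun t ht => ?_) s
      ⟨by linarith, by linarith⟩ ?_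
    · exact (hX x (hxδ x hx)).2 t ⟨by linarith [ht.1], by linarith [ht.2]⟩
    · exact hW x hx t ⟨by linarith [ht.1], by linarith [ht.2]⟩
    · simp only [W, sub_self]
      exact ((hφ _ (hxw x hx)).1).symm
  let Y : ℝ × E → E := fun q => if q.1 ≤ s then X q else W q
  have hYX : ∀ x ∈ ball z d, ∀ t < s + m, Y (t, x) = X (t, x) := by
    intro x hx t ht
    by_cases hts : t ≤ s
    · simp [Y, hts]
    · simp only [Y, hts, if_false]
      exact (hag x hx ⟨by linarith, ht⟩).symm
  have hYW : ∀ x ∈ ball z d, ∀ t > s - m, Y (t, x) = W (t, x) := by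
    intro x hx t ht
    by_cases hts : t ≤ s
    · simp only [Y, hts, if_true]
      exact (hag x hx ⟨ht, by linarith⟩)
    · simp [Y, hts]
  refine ⟨d, hd0, Y, ?_, fun x hx => ⟨?_, fun t ht => ?_⟩⟩
  · rintro ⟨t, x⟩ ⟨ht, hx⟩
    simp only at ht hx
    by_cases hts : t < s + m
    · refine (hXa (t, x) ⟨⟨by linarith [ht.1], by linarith⟩, hxδ x hx⟩).congr ?_
      filter_upwards [prod_mem_nhds (Iio_mem_nhds hts) (isOpen_ball.mem_nhds hx)] with q hq
      exact (hYX q.2 hq.2 q.1 hq.1).symm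
    · have hts' : s - m < t := by linarith
      refine (hWa (t, x) ⟨⟨by linarith [ht.1], by linarith [ht.2]⟩, hx⟩).congr ?_
      filter_upwards [prod_mem_nhds (Ioi_mem_nhds hts') (isOpen_ball.mem_nhds hx)] with q hq
      exact (hYW q.2 hq.2 q.1 hq.1).symm
  · rw [hYX x hx 0 (by linarith)]
    exact (hX x (hxδ x hx)).1
  · by_cases hts : t < s + m
    · rw [hYX x hx t hts]
      refine ((hX x (hxδ x hx)).2 t ⟨by linarith [ht.1], by linarith⟩).congr_of_eventuallyEq ?_
      filter_upwards [Iio_mem_nhds hts] with r hr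
      exact hYX x hx r hr
    · have hts' : s - m < t := by linarith
      rw [hYW x hx t hts']
      refine (hW x hx t ⟨by linarith, by linarith [ht.2]⟩).congr_of_eventuallyEq ?_
      filter_upwards [Ioi_mem_nhds hts'] with r hr
      exact hYW x hx r hr

theorem flow_exists [CompleteSpace E] (g : E → E) (hg : ∀ z, AnalyticAt ℝ g z) (z : E)
    (Z : ℝ → E) (hZ0 : Z 0 = z) (T : ℝ) (hT : 0 ≤ T)
    (hZ : ∀ t ∈ Icc 0 T, HasDerivAt Z (g (Z t)) t) : HasFlow g z T := by
  refine (isPreconnected_Icc (a := (0:ℝ)) (b := T)).induction₂'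
    (fun s t => HasFlow g z s → HasFlow g z t) ?_ (fun x y z _ _ _ h h' hx => h' (h hx))
    ⟨le_rfl, hT⟩ ⟨hT, le_rfl⟩ ?_
  · intro s hs
    obtain ⟨φ, ε, hε, hφa, hφ⟩ := local_flow g hg (Z s)
    have hZc := (hZ s hs).continuousAt
    filter_upwards [self_mem_nhdsWithin,
      mem_nhdsWithin_of_mem_nhds (Ioo_mem_nhds (a := s - ε / 2) (b := s + ε / 2) (by linarith) (by linarith)),
      mem_nhdsWithin_of_mem_nhds (hZc.eventually (ball_mem_nhds _ hε))] with t ht hts hZt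
    constructor
    · exact flow_step g hg z Z hZ0 s t hs.1 (fun r hr => hZ r ⟨hr.1, hr.2.trans hs.2⟩) φ (Z s) ε hε
        hφa hφ (mem_ball_self hε) hts.2
    · exact flow_step g hg z Z hZ0 t s ht.1 (fun r hr => hZ r ⟨hr.1, hr.2.trans ht.2⟩) φ (Z s) ε hε
        hφa hφ hZt (by linarith [hts.1])
  · obtain ⟨φ, ε, hε, hφa, hφ⟩ := local_flow g hg z
    exact ⟨ε, hε, φ, by simpa using hφa, by simpa using hφ⟩

end local_part



/-- Analytic dependence of ODE solutions on time, parameters and initial conditions: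
if `f : ℝ^k × ℝ^n → ℝ^k` is entire real-analytic and the IVP `X' = f(X, α₀)`,
`X(0) = x₀` has a solution on `[0, T]`, then there are `t₀ > 0`, `t₁ > T` and open
neighborhoods `Vα ∋ α₀`, `Vx ∋ x₀` on which a jointly real-analytic flow
`X(t, α, x)` exists, with `X(0, α, x) = x` and `∂X/∂t = f(X, α)`. -/
theorem stmt_17 (k n : ℕ) (f : (Fin k → ℝ) × (Fin n → ℝ) → (Fin k → ℝ))
    (hf : ∀ z, ∃ pser : FormalMultilinearSeries ℝ ((Fin k → ℝ) × (Fin n → ℝ)) (Fin k → ℝ),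
      HasFPowerSeriesOnBall f pser z ⊤)
    (α₀ : Fin n → ℝ) (x₀ : Fin k → ℝ) (T : ℝ) (hT : 0 ≤ T)
    (X₀ : ℝ → (Fin k → ℝ)) (hX₀0 : X₀ 0 = x₀)
    (hX₀ : ∀ t ∈ Set.Icc (0 : ℝ) T, HasDerivAt X₀ (f (X₀ t, α₀)) t) :
    ∃ (t₀ t₁ : ℝ) (Vα : Set (Fin n → ℝ)) (Vx : Set (Fin k → ℝ)),
      0 < t₀ ∧ T < t₁ ∧ IsOpen Vα ∧ α₀ ∈ Vα ∧ IsOpen Vx ∧ x₀ ∈ Vx ∧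
      ∃ X : ℝ × (Fin n → ℝ) × (Fin k → ℝ) → (Fin k → ℝ),
        AnalyticOnNhd ℝ X (Set.Ioo (-t₀) t₁ ×ˢ Vα ×ˢ Vx) ∧
        (∀ α ∈ Vα, ∀ x ∈ Vx, X (0, α, x) = x) ∧
        ∀ t ∈ Set.Ioo (-t₀) t₁, ∀ α ∈ Vα, ∀ x ∈ Vx,
          HasDerivAt (fun s => X (s, α, x)) (f (X (t, α, x), α)) t := by
  have hfa : ∀ z, AnalyticAt ℝ f z := fun z => by
    obtain ⟨p, hp⟩ := hf z
    exact hp.analyticAt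
  let g : (Fin k → ℝ) × (Fin n → ℝ) → (Fin k → ℝ) × (Fin n → ℝ) := fun z => (f z, 0)
  have hga : ∀ z, AnalyticAt ℝ g z := fun z => (hfa z).prod analyticAt_const
  obtain ⟨δ, hδ, X, hXa, hX⟩ := flow_exists g hga (x₀, α₀) (fun t => (X₀ t, α₀)) (by simp [hX₀0]) T hT
    (fun t ht => (hX₀ t ht).prodMk (hasDerivAt_const t α₀))
  have hball : ∀ α ∈ Metric.ball α₀ δ, ∀ x ∈ Metric.ball x₀ δ, (x, α) ∈ Metric.ball (x₀, α₀) δ := by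
    intro α hα x hx
    rw [← ball_prod_same]
    exact ⟨hx, hα⟩
  refine ⟨δ, T + δ, Metric.ball α₀ δ, Metric.ball x₀ δ, hδ, by linarith, Metric.isOpen_ball,
    Metric.mem_ball_self hδ, Metric.isOpen_ball, Metric.mem_ball_self hδ,
    fun q => (X (q.1, (q.2.2, q.2.1))).1, ?_, ?_, ?_⟩
  · rintro ⟨t, α, x⟩ ⟨ht, hα, hx⟩
    have h1 : AnalyticAt ℝ X (t, (x, α)) := hXa _ ⟨ht, hball α hα x hx⟩
    have h2 : AnalyticAt ℝ (fun q : ℝ × (Fin n → ℝ) × (Fin k → ℝ) => (q.1, (q.2.2, q.2.1)))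
        (t, α, x) :=
      analyticAt_fst.prod ((AnalyticAt.fun_comp analyticAt_snd analyticAt_snd).prod
        (AnalyticAt.fun_comp analyticAt_fst analyticAt_snd))
    exact AnalyticAt.fun_comp analyticAt_fst (AnalyticAt.fun_comp (g := X) h1 h2)
  · intro α hα x hx
    simp [(hX _ (hball α hα x hx)).1]
  · intro t ht α hα x hx
    obtain ⟨h0, hder⟩ := hX _ (hball α hα x hx)
    have hsnd : (X (t, (x, α))).2 = α := by
      have hd2 : ∀ s ∈ Set.Ioo (-δ) (T + δ), HasDerivAt (fun r => (X (r, (x, α))).2) 0 s :=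
        fun s hs => (hder s hs).snd
      have h0m : (0:ℝ) ∈ Set.Ioo (-δ) (T + δ) := ⟨by linarith, by linarith⟩
      exact ode_unique (fun _ => (0 : Fin n → ℝ)) (fun _ => analyticAt_const) _ isPreconnected_Ioo
        (fun r => (X (r, (x, α))).2) (fun _ => α) hd2 (fun s _ => hasDerivAt_const s α) 0 h0m
        (by simp [h0]) ht
    have h3 := (hder t ht).fst
    have h4 : X (t, (x, α)) = ((X (t, (x, α))).1, α) := Prod.ext rfl hsnd
    have h5 : f (X (t, (x, α))) = f ((X (t, (x, α))).1, α) := congrArg f h4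
    rw [← h5]
    exact h3
end

section
/- Let f : ℝ^k × ℝ^n → ℝ^k be real-analytic on all of ℝ^k × ℝ^n with infinite radius of convergence, let N ≥ 1 with n ≤ Nk, and define F : (ℝ^k)^N × ℝ^n → (ℝ^k)^N by F(y, α) = (f(y₁, α), …, f(y_N, α)). Let α₀ ∈ ℝ^n, x₀ ∈ ℝ^k, set y₀ = (x₀, …, x₀), and assume the partial derivative ∂f/∂α(x₀, α₀) : ℝ^n → ℝ^k stacked over the N copies, i.e. ∂F/∂α(y₀, α₀) : ℝ^n → (ℝ^k)^N, is injective. Suppose Y : (−t₀, t₁) × V_{α₀} × V_{y₀} → (ℝ^k)^N is jointly real-analytic on the connected open set (−t₀, t₁) × V_{α₀} × V_{y₀} (with 0 ∈ (−t₀, t₁), α₀ ∈ V_{α₀}, y₀ ∈ V_{y₀}) and satisfies ∂Y/∂t(t, α, y) = F(Y(t, α, y), α) and Y(0, α, y) = y. Then there exists a set 𝒜 ⊂ (−t₀, t₁) × V_{α₀} × V_{y₀} of Lebesgue measure zero such that for every (t, α, y) not in 𝒜, the partial derivative ∂Y/∂α(t, α, y) : ℝ^n → (ℝ^k)^N is injective;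 equivalently, (∂Y/∂α)ᵀ(∂Y/∂α)(t, α, y) is positive definite. -/
open MeasureTheory

open Filter Topology in
/-- Zero set of a nonzero real-analytic function on a connected open set is null. -/
theorem aux_null {E : Type*} [NormedAddCommGroup E] [NormedSpace ℝ E] [FiniteDimensional ℝ E]
    [MeasurableSpace E] [BorelSpace E] (μ : Measure E) [μ.IsAddHaarMeasure]
    (U : Set E) (hUo : IsOpen U) (hU : IsPreconnected U) (g : E → ℝ)
    (hg : AnalyticOnNhd ℝ g U) (w : E) (hw : w ∈ U) (hgw : g w ≠ 0) :
    μ {x | x ∈ U ∧ g x = 0} = 0 := by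
  have : ProperSpace E := FiniteDimensional.proper_real E
  have : SecondCountableTopology E := inferInstance
  apply measure_null_of_locally_null
  rintro x ⟨hxU, hgx⟩
  obtain ⟨r, hr, hrU⟩ := Metric.isOpen_iff.1 hUo x hxU
  obtain ⟨z, hz, hgz⟩ : ∃ z ∈ Metric.ball x r, g z ≠ 0 := by
    by_contra! hcon
    apply hgw
    have h0 : g =ᶠ[𝓝 x] 0 := by
      filter_upwards [Metric.ball_mem_nhds x hr] with y hy using hcon y hy
    exact hg.eqOn_zero_of_preconnected_of_eventuallyEq_zero hU hxU h0 hw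
  have hnz : {y | y ∈ Metric.ball x r ∧ g y ≠ 0} ∈ 𝓝 z :=
    inter_mem (Metric.isOpen_ball.mem_nhds hz)
      ((hg z (hrU hz)).continuousAt.eventually_ne hgz)
  obtain ⟨ε, hε, hεU⟩ := Metric.mem_nhds_iff.1 hnz
  set δ := min ε r with hδ
  have hδ0 : 0 < δ := lt_min hε hr
  set S : Set E := Metric.ball x δ ∩ {y | g y = 0} with hS
  have hSsub : Metric.ball x δ ⊆ U :=
    (Metric.ball_subset_ball (min_le_right _ _)).trans hrU
  refine ⟨S, ?_, ?_⟩
  · filter_upwards [mem_nhdsWithin_of_mem_nhds (Metric.ball_mem_nhds x hδ0),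
      self_mem_nhdsWithin] with y hy hy2 using ⟨hy, hy2.2⟩
  have hSm : MeasurableSet S := by
    have hc : ContinuousOn g (Metric.ball x δ) := fun y hy =>
      (hg y (hSsub hy)).continuousAt.continuousWithinAt
    have hopen : IsOpen (Metric.ball x δ ∩ g ⁻¹' {0}ᶜ) :=
      hc.isOpen_inter_preimage Metric.isOpen_ball isOpen_compl_singleton
    have : S = Metric.ball x δ \ (Metric.ball x δ ∩ g ⁻¹' {0}ᶜ) := by
      ext y; simp [hS]
    rw [this]
    exact Metric.isOpen_ball.measurableSet.diff hopen.measurableSet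
  have key := ae_mem_of_ae_add_linearMap_mem (LinearMap.toSpanSingleton ℝ E (x - z))
    (volume : Measure ℝ) μ hSm.compl ?_
  · have := mem_ae_iff.1 key
    have hSS : {x | x ∈ Sᶜ}ᶜ = S := by ext; simp
    rwa [hSS] at this
  intro y
  simp only [LinearMap.toSpanSingleton_apply]
  by_cases hne : ∃ s : ℝ, y + s • (x - z) ∈ S
  swap
  · push Not at hne
    exact Eventually.of_forall hne
  obtain ⟨s₀, hs₀⟩ := hne
  set l : ℝ → E := fun s => y + s • (x - z) with hl
  have hla : AnalyticOnNhd ℝ l Set.univ := fun s _ => by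
    simp only [hl]; fun_prop
  set I : Set ℝ := l ⁻¹' Metric.ball x r with hI
  have hlc : Continuous l := by simp only [hl]; fun_prop
  have hIo : IsOpen I := Metric.isOpen_ball.preimage hlc
  have hIc : Convex ℝ I := by
    intro a ha b hb p q hp hq hpq
    have h1 := convex_ball x r ha hb hp hq hpq
    have h2 : l (p • a + q • b) = p • l a + q • l b := by
      simp only [hl, smul_eq_mul]
      have : y = (p + q) • y := by rw [hpq, one_smul]
      nth_rewrite 1 [this]
      module
    change l _ ∈ Metric.ball x r
    rw [h2]; exact h1
  have hgl : AnalyticOnNhd ℝ (fun s => g (l s)) I := fun s hs =>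
    (hg (l s) (hrU hs)).comp (hla s trivial)
  have hpt : l (s₀ - 1) ∈ Metric.ball z ε := by
    have h1 : dist (y + s₀ • (x - z)) x < ε := lt_of_lt_of_le hs₀.1 (min_le_left _ _)
    rw [Metric.mem_ball, dist_eq_norm]
    rw [dist_eq_norm] at h1
    convert h1 using 2
    simp only [hl]; module
  have hpt2 := hεU hpt
  rcases hgl.eqOn_zero_or_eventually_ne_zero_of_preconnected hIc.isPreconnected with h | h
  · exact absurd (h hpt2.1) hpt2.2
  have h2 := (ae_restrict_le_codiscreteWithin (μ := volume) hIo.measurableSet) h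
  have h3 := (ae_restrict_iff' hIo.measurableSet).1 h2
  filter_upwards [h3] with s hs hsS
  exact hs (Metric.ball_subset_ball (min_le_right _ _) hsS.1) hsS.2

open Filter Topology in
/-- A matrix curve vanishing at `0` with derivative the identity has nonzero determinant
arbitrarily close to `0`. -/
theorem aux_det (n : ℕ) (m : ℝ → Matrix (Fin n) (Fin n) ℝ) (h0 : m 0 = 0)
    (hd : ∀ i j, HasDerivAt (fun s => m s i j) ((1 : Matrix (Fin n) (Fin n) ℝ) i j) 0) :
    ∀ᶠ s in 𝓝[≠] (0 : ℝ), (m s).det ≠ 0 := by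
  have ht : Tendsto (fun s : ℝ => s⁻¹ • m s) (𝓝[≠] 0) (𝓝 1) := by
    refine tendsto_pi_nhds.2 fun i => tendsto_pi_nhds.2 fun j => ?_
    have := hasDerivAt_iff_tendsto_slope_zero.1 (hd i j)
    simpa [h0] using this
  have hdet : Tendsto (fun s : ℝ => (s⁻¹ • m s).det) (𝓝[≠] 0) (𝓝 1) := by
    have hc : Continuous (fun A : Matrix (Fin n) (Fin n) ℝ => A.det) :=
      continuous_id.matrix_det
    have := (hc.tendsto 1).comp ht
    rw [Matrix.det_one] at this
    exact this
  filter_upwards [hdet.eventually_ne one_ne_zero] with s hs h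
  apply hs
  rw [Matrix.det_smul, h, mul_zero]

theorem aux_haar (n N k : ℕ) :
    (volume : Measure (ℝ × (Fin n → ℝ) × (Fin N → Fin k → ℝ))).IsAddHaarMeasure := by
  have h1 : (volume : Measure (Fin N → Fin k → ℝ)).IsAddHaarMeasure :=
    Measure.pi.isAddHaarMeasure _
  have h2 : (volume : Measure ((Fin n → ℝ) × (Fin N → Fin k → ℝ))).IsAddHaarMeasure :=
    Measure.prod.instIsAddHaarMeasure _ _
  exact Measure.prod.instIsAddHaarMeasure _ _

set_option maxHeartbeats 2000000 in
/-- Generic full rank of the parameter derivative of an analytic flow: let `f` be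
entire real-analytic, `n ≤ Nk`, `F(y,α) = (f(y₁,α),…,f(y_N,α))`, assume
`∂F/∂α(y₀,α₀)` is injective for `y₀ = (x₀,…,x₀)`, and let `Y` be a jointly
real-analytic solution of `∂Y/∂t = F(Y,α)`, `Y(0,α,y) = y` on the connected open set
`(−t₀,t₁) × Vα × Vy`. Then off a Lebesgue-null subset `𝒜` of this set, the parameter
derivative `∂Y/∂α(t,α,y) : ℝ^n → (ℝ^k)^N` is injective (equivalently,
`(∂Y/∂α)ᵀ(∂Y/∂α)` is positive definite). -/
theorem stmt_18 (k n N : ℕ) (hN : 1 ≤ N) (hnk : n ≤ N * k)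
    (f : (Fin k → ℝ) × (Fin n → ℝ) → (Fin k → ℝ))
    (hf : ∀ z, ∃ pser : FormalMultilinearSeries ℝ ((Fin k → ℝ) × (Fin n → ℝ)) (Fin k → ℝ),
      HasFPowerSeriesOnBall f pser z ⊤)
    (α₀ : Fin n → ℝ) (x₀ : Fin k → ℝ)
    (hinj : Function.Injective
      (fderiv ℝ (fun α : Fin n → ℝ => fun _i : Fin N => f (x₀, α)) α₀))
    (t₀ t₁ : ℝ) (ht₀ : 0 < t₀) (ht₁ : 0 < t₁)
    (Vα : Set (Fin n → ℝ)) (Vy : Set (Fin N → Fin k → ℝ))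
    (hVαo : IsOpen Vα) (hVyo : IsOpen Vy)
    (hα₀ : α₀ ∈ Vα) (hy₀ : (fun _ : Fin N => x₀) ∈ Vy)
    (hconn : IsConnected (Set.Ioo (-t₀) t₁ ×ˢ Vα ×ˢ Vy))
    (Y : ℝ × (Fin n → ℝ) × (Fin N → Fin k → ℝ) → (Fin N → Fin k → ℝ))
    (hY : AnalyticOnNhd ℝ Y (Set.Ioo (-t₀) t₁ ×ˢ Vα ×ˢ Vy))
    (hODE : ∀ t ∈ Set.Ioo (-t₀) t₁, ∀ α ∈ Vα, ∀ y ∈ Vy,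
      HasDerivAt (fun s => Y (s, α, y)) (fun i => f (Y (t, α, y) i, α)) t)
    (hinit : ∀ α ∈ Vα, ∀ y ∈ Vy, Y (0, α, y) = y) :
    ∃ 𝒜 : Set (ℝ × (Fin n → ℝ) × (Fin N → Fin k → ℝ)),
      𝒜 ⊆ Set.Ioo (-t₀) t₁ ×ˢ Vα ×ˢ Vy ∧ volume 𝒜 = 0 ∧
      ∀ t ∈ Set.Ioo (-t₀) t₁, ∀ α ∈ Vα, ∀ y ∈ Vy, (t, α, y) ∉ 𝒜 →
        Function.Injective (fderiv ℝ (fun α' => Y (t, α', y)) α) := by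
  classical
  set U := Set.Ioo (-t₀) t₁ ×ˢ Vα ×ˢ Vy with hUdef
  set y₀ : Fin N → Fin k → ℝ := fun _ => x₀ with hy₀def
  have hUo : IsOpen U := isOpen_Ioo.prod (hVαo.prod hVyo)
  have h00 : (0 : ℝ) ∈ Set.Ioo (-t₀) t₁ := ⟨by linarith, ht₁⟩
  have hp : ((0 : ℝ), α₀, y₀) ∈ U := ⟨h00, hα₀, hy₀⟩
  have hfa : ∀ z, AnalyticAt ℝ f z := fun z => by
    obtain ⟨p, hp⟩ := hf z
    exact ⟨p, ⊤, hp⟩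
  set Φ : (Fin n → ℝ) → (Fin N → Fin k → ℝ) := fun α => fun _i => f (x₀, α) with hΦ
  have hΦd : DifferentiableAt ℝ Φ α₀ := by
    refine differentiableAt_pi.2 fun i => ?_
    exact (hfa (x₀, α₀)).differentiableAt.comp α₀
      ((differentiableAt_const x₀).prodMk differentiableAt_id)
  -- left inverse
  obtain ⟨P, hP⟩ := LinearMap.exists_leftInverse_of_injective
    (fderiv ℝ Φ α₀ : (Fin n → ℝ) →ₗ[ℝ] (Fin N → Fin k → ℝ)) (LinearMap.ker_eq_bot.2 hinj)
  have hP' : ∀ w, P (fderiv ℝ Φ α₀ w) = w := fun w => congrArg (fun L => L w) hP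
  set Pc : (Fin N → Fin k → ℝ) →L[ℝ] (Fin n → ℝ) := LinearMap.toContinuousLinearMap P with hPc
  set e : Fin n → ℝ × (Fin n → ℝ) × (Fin N → Fin k → ℝ) :=
    fun j => (0, Pi.single j 1, 0) with he
  set m : ℝ × (Fin n → ℝ) × (Fin N → Fin k → ℝ) → Matrix (Fin n) (Fin n) ℝ :=
    fun x => Matrix.of fun i j => Pc (fderiv ℝ Y x (e j)) i with hm
  -- analyticity
  have hma : ∀ i j, AnalyticOnNhd ℝ (fun x => m x i j) U := fun i j x hx => by
    let L : ((ℝ × (Fin n → ℝ) × (Fin N → Fin k → ℝ)) →L[ℝ] (Fin N → Fin k → ℝ)) →L[ℝ] ℝ :=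
      (ContinuousLinearMap.proj (R := ℝ) (φ := fun _ : Fin n => ℝ) i).comp
        (Pc.comp (ContinuousLinearMap.apply ℝ (Fin N → Fin k → ℝ) (e j)))
    exact (L.analyticAt _).comp (hY x hx).fderiv
  have hdeta : AnalyticOnNhd ℝ (fun x => (m x).det) U := fun x hx => by
    simp only [Matrix.det_apply']
    apply Finset.analyticAt_fun_sum
    intro σ _
    apply AnalyticAt.mul analyticAt_const
    apply Finset.analyticAt_fun_prod
    intro i _
    exact hma _ _ x hx
  -- partial derivative
  have hpart : ∀ t ∈ Set.Ioo (-t₀) t₁, ∀ α ∈ Vα, ∀ y ∈ Vy, HasFDerivAt (fun α' => Y (t, α', y))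
      ((fderiv ℝ Y (t, α, y)).comp ((ContinuousLinearMap.inr ℝ ℝ _).comp
        (ContinuousLinearMap.inl ℝ (Fin n → ℝ) (Fin N → Fin k → ℝ)))) α := by
    intro t ht α hα y hy
    have h1 := (hY (t, α, y) ⟨ht, hα, hy⟩).differentiableAt.hasFDerivAt
    have h2 : HasFDerivAt (fun α' : Fin n → ℝ => (t, α', y)) ((ContinuousLinearMap.inr ℝ ℝ _).comp
        (ContinuousLinearMap.inl ℝ (Fin n → ℝ) (Fin N → Fin k → ℝ))) α := by
      have h3 := (hasFDerivAt_const (𝕜 := ℝ) t α).prodMk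
        ((hasFDerivAt_id (𝕜 := ℝ) α).prodMk (hasFDerivAt_const (𝕜 := ℝ) y α))
      have h4 : (ContinuousLinearMap.inr ℝ ℝ _).comp
          (ContinuousLinearMap.inl ℝ (Fin n → ℝ) (Fin N → Fin k → ℝ)) =
          (0 : (Fin n → ℝ) →L[ℝ] ℝ).prod ((ContinuousLinearMap.id ℝ (Fin n → ℝ)).prod
            (0 : (Fin n → ℝ) →L[ℝ] (Fin N → Fin k → ℝ))) := by
        ext <;> simp
      rw [h4]
      exact h3
    exact h1.comp α h2
  have htime : ∀ t ∈ Set.Ioo (-t₀) t₁, ∀ α ∈ Vα, ∀ y ∈ Vy,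
      fderiv ℝ Y (t, α, y) (1, 0, 0) = fun i => f (Y (t, α, y) i, α) := by
    intro t ht α hα y hy
    have h1 := (hY (t, α, y) ⟨ht, hα, hy⟩).differentiableAt.hasFDerivAt
    have h2 : HasDerivAt (fun s : ℝ => (s, α, y)) (1, 0, 0) t :=
      (hasDerivAt_id t).prodMk ((hasDerivAt_const t α).prodMk (hasDerivAt_const t y))
    exact (h1.comp_hasDerivAt t h2).unique (hODE t ht α hα y hy)
  have hp' := hY _ hp
  have hD2 := hp'.fderiv.differentiableAt.hasFDerivAt
  have hsymm : IsSymmSndFDerivAt ℝ Y (0, α₀, y₀) :=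
    (hp'.contDiffAt (n := ⊤)).isSymmSndFDerivAt_of_omega
  have hcross : ∀ w : Fin n → ℝ, HasDerivAt (fun s : ℝ => fderiv ℝ Y (s, α₀, y₀) (0, w, 0))
      (fderiv ℝ Φ α₀ w) 0 := by
    intro w
    have h2 : HasDerivAt (fun s : ℝ => (s, α₀, y₀)) (1, 0, 0) 0 :=
      (hasDerivAt_id 0).prodMk ((hasDerivAt_const 0 α₀).prodMk (hasDerivAt_const 0 y₀))
    have h3 := (hD2.comp_hasDerivAt (0 : ℝ) h2).clm_apply
      (hasDerivAt_const (0 : ℝ) ((0 : ℝ), w, (0 : Fin N → Fin k → ℝ)))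
    have hline : HasDerivAt (fun s : ℝ => α₀ + s • w) w 0 := by
      simpa using ((hasDerivAt_id (0 : ℝ)).smul_const w).const_add α₀
    have h4 : HasDerivAt (fun s : ℝ => ((0 : ℝ), α₀ + s • w, y₀)) (0, w, 0) 0 :=
      (hasDerivAt_const 0 (0 : ℝ)).prodMk (hline.prodMk (hasDerivAt_const 0 y₀))
    have hD2' : HasFDerivAt (fderiv ℝ Y) (fderiv ℝ (fderiv ℝ Y) (0, α₀, y₀))
        ((fun s : ℝ => ((0 : ℝ), α₀ + s • w, y₀)) 0) := by
      simpa using hD2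
    have h5 := (hD2'.comp_hasDerivAt (0 : ℝ) h4).clm_apply
      (hasDerivAt_const (0 : ℝ) ((1 : ℝ), (0 : Fin n → ℝ), (0 : Fin N → Fin k → ℝ)))
    have hΦd' : HasFDerivAt Φ (fderiv ℝ Φ α₀) ((fun s : ℝ => α₀ + s • w) 0) := by
      simpa using hΦd.hasFDerivAt
    have h6 := hΦd'.comp_hasDerivAt (0 : ℝ) hline
    have hev : ∀ᶠ s in nhds (0 : ℝ), α₀ + s • w ∈ Vα := by
      apply hline.continuousAt.eventually_mem
      simpa using hVαo.mem_nhds hα₀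
    have h7 : (Φ ∘ fun s : ℝ => α₀ + s • w) =ᶠ[nhds 0]
        fun s : ℝ => fderiv ℝ Y ((0 : ℝ), α₀ + s • w, y₀) (1, 0, 0) := by
      filter_upwards [hev] with s hs
      rw [htime 0 h00 _ hs _ hy₀, hinit _ hs _ hy₀]
      rfl
    have h8 := h5.unique (h6.congr_of_eventuallyEq h7.symm)
    have h9 := hsymm (1, 0, 0) (0, w, 0)
    simp only [map_zero, add_zero] at h3 h8
    rw [← h8, ← h9]
    exact h3
  have hm0 : m (0, α₀, y₀) = 0 := by
    have h1 := hpart 0 h00 α₀ hα₀ y₀ hy₀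
    have h2 : (fun α' => Y (0, α', y₀)) =ᶠ[nhds α₀] fun _ => y₀ := by
      filter_upwards [hVαo.mem_nhds hα₀] with α hα using hinit α hα y₀ hy₀
    have h3 := h1.unique ((hasFDerivAt_const y₀ α₀).congr_of_eventuallyEq h2)
    ext i j
    have h4 : fderiv ℝ Y (0, α₀, y₀) (e j) = 0 := by
      simpa using! congrArg (fun L => L (Pi.single j 1)) h3
    simp [hm, h4]
  have hdm := aux_det n (fun s => m (s, α₀, y₀)) hm0 (by
    intro i j
    have h1 := Pc.hasFDerivAt.comp_hasDerivAt (0 : ℝ) (hcross (Pi.single j 1))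
    have h2 := hasDerivAt_pi.1 h1 i
    have h3 : Pc (fderiv ℝ Φ α₀ (Pi.single j 1)) i = (1 : Matrix (Fin n) (Fin n) ℝ) i j := by
      have := hP' (Pi.single j 1)
      rw [hPc, LinearMap.coe_toContinuousLinearMap', this, Matrix.one_apply, Pi.single_apply]
    rw [h3] at h2
    exact h2)
  obtain ⟨s, hs, hsI⟩ := (hdm.and (mem_nhdsWithin_of_mem_nhds (isOpen_Ioo.mem_nhds h00))).exists
  refine ⟨{x | x ∈ U ∧ (m x).det = 0}, fun x hx => hx.1, ?_, ?_⟩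
  · have := aux_haar n N k
    exact aux_null volume U hUo hconn.isPreconnected _ hdeta (s, α₀, y₀) ⟨hsI, hα₀, hy₀⟩ hs
  intro t ht α hα y hy hnot
  have hdet : (m (t, α, y)).det ≠ 0 := fun h => hnot ⟨⟨ht, hα, hy⟩, h⟩
  rw [(hpart t ht α hα y hy).fderiv]
  rw [injective_iff_map_eq_zero]
  intro w hw
  refine Matrix.eq_zero_of_mulVec_eq_zero hdet ?_
  have hmv : ∀ w : Fin n → ℝ, (m (t, α, y)).mulVec w = Pc (fderiv ℝ Y (t, α, y) (0, w, 0)) := by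
    intro w
    have hsum : ((0 : ℝ), w, (0 : Fin N → Fin k → ℝ)) = ∑ j, w j • e j := by
      refine Prod.ext ?_ (Prod.ext ?_ ?_)
      · simp [he, Prod.fst_sum]
      · ext i
        simp [he, Prod.fst_sum, Prod.snd_sum, Finset.sum_apply, Pi.single_apply]
      · simp [he, Prod.snd_sum]
    rw [hsum]
    ext i
    simp only [map_sum, map_smul, Matrix.mulVec, dotProduct, Finset.sum_apply, Pi.smul_apply,
      smul_eq_mul, hm, Matrix.of_apply]
    exact Finset.sum_congr rfl fun j _ => mul_comm _ _
  rw [hmv]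
  have hw' : fderiv ℝ Y (t, α, y) (0, w, 0) = 0 := hw
  rw [hw', map_zero]
end
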